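/- arXiv:2302.07085 — 4 statements merged into one kernel-verified Lean document; each statement's English description precedes it below -/
import Mathlib

section
/- Let Ω ⊂ ℂⁿ, n ≥ 2, be a bounded pseudoconvex domain with C^∞ boundary, and let p ∈ ∂Ω be a strongly pseudoconvex boundary point. Let F : Ω → Ω be a holomorphic map with F(z) = z + o(‖z−p‖) as z → p within Ω. Then for every neighborhood V of p in ℂⁿ, there exists a point z ∈ V ∩ Ω such that F^m(z) ∈ V for every m ≥ 1. -/
open Complex Topology Filter Metric Set Function

noncomputable section

/-- `ℂⁿ` as a normed space. -/
abbrev En (n : ℕ) : Type := EuclideanSpace ℂ (Fin n)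

/-- A domain: a nonempty open connected set. -/
def IsDomain' {n : ℕ} (Ω : Set (En n)) : Prop :=
  IsOpen Ω ∧ IsConnected Ω

/-- The Levi form of `ρ` at `q` in direction `ξ`:
`(1/4)(H_q(ξ,ξ) + H_q(iξ,iξ))` with `H_q` the second real Fréchet derivative. -/
def LeviForm {n : ℕ} (ρ : En n → ℝ) (q ξ : En n) : ℝ :=
  (1 / 4) * (iteratedFDeriv ℝ 2 ρ q ![ξ, ξ] + iteratedFDeriv ℝ 2 ρ q ![I • ξ, I • ξ])

/-- `ξ` lies in the complex tangent space of `{ρ = 0}` at `q`. -/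
def InCplxTangent {n : ℕ} (ρ : En n → ℝ) (q ξ : En n) : Prop :=
  fderiv ℝ ρ q ξ = 0 ∧ fderiv ℝ ρ q (I • ξ) = 0

/-- `ρ` is a `C^m` defining function for `Ω`. -/
def IsDefiningFunction {n : ℕ} (Ω : Set (En n)) (m : ℕ∞) (ρ : En n → ℝ) : Prop :=
  ContDiff ℝ m ρ ∧ Ω = {z | ρ z < 0} ∧ frontier Ω = {z | ρ z = 0} ∧
    ∀ q ∈ frontier Ω, fderiv ℝ ρ q ≠ 0

/-- `q` is a strongly pseudoconvex point with respect to `ρ`. -/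
def StronglyPcxAt {n : ℕ} (ρ : En n → ℝ) (q : En n) : Prop :=
  ∀ ξ : En n, ξ ≠ 0 → InCplxTangent ρ q ξ → 0 < LeviForm ρ q ξ

/-- `Ω` is pseudoconvex with `C^∞` boundary, witnessed by the defining function `ρ`. -/
def IsPcxCinfBoundary {n : ℕ} (Ω : Set (En n)) (ρ : En n → ℝ) : Prop :=
  IsDefiningFunction Ω ⊤ ρ ∧
    ∀ q ∈ frontier Ω, ∀ ξ : En n, InCplxTangent ρ q ξ → 0 ≤ LeviForm ρ q ξ

/-- `F z = z + o(‖z - p‖^k)` as `z → p` within `Ω`. -/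
def LittleOh {n : ℕ} (Ω : Set (En n)) (F : En n → En n) (p : En n) (k : ℕ) : Prop :=
  Tendsto (fun z => ‖F z - z‖ / ‖z - p‖ ^ k) (𝓝[Ω] p) (𝓝 0)

/-- `F` is an automorphism of `Ω`: a holomorphic bijection with holomorphic inverse. -/
def IsAutomorphismOf {n : ℕ} (F : En n → En n) (Ω : Set (En n)) : Prop :=
  DifferentiableOn ℂ F Ω ∧ MapsTo F Ω Ω ∧
    ∃ G : En n → En n, DifferentiableOn ℂ G Ω ∧ MapsTo G Ω Ω ∧
      (∀ z ∈ Ω, G (F z) = z) ∧ (∀ z ∈ Ω, F (G z) = z)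

/-- The value `H_q(ξ,ξ) + H_q(iξ,iξ)`, where `H_q` is the second real derivative of `u` at `q`. -/
def complexHessian {E : Type*} [NormedAddCommGroup E] [NormedSpace ℂ E] (u : E → ℝ) (q ξ : E) : ℝ :=
  fderiv ℝ (fderiv ℝ u) q ξ ξ + fderiv ℝ (fderiv ℝ u) q (I • ξ) (I • ξ)

theorem nonpos_of_isLocalMax_of_hasDerivAt {f f' : ℝ → ℝ} {a x : ℝ}
    (hf : ∀ᶠ s in 𝓝 x, HasDerivAt f (f' s) s) (hf' : HasDerivAt f' a x)
    (hmax : IsLocalMax f x) : a ≤ 0 := by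
  by_contra! ha
  have hd : deriv f =ᶠ[𝓝 x] f' := hf.mono fun s hs => hs.deriv
  have hdd : deriv (deriv f) x = a := by rw [hd.deriv_eq, hf'.deriv]
  have hmin : IsLocalMin f x :=
    isLocalMin_of_deriv_deriv_pos (by rw [hdd]; exact ha) hmax.deriv_eq_zero
      hf.self_of_nhds.continuousAt
  have hc : f =ᶠ[𝓝 x] fun _ => f x := by
    filter_upwards [hmax, hmin] with s h1 h2 using le_antisymm h1 h2
  have h0 : deriv f =ᶠ[𝓝 x] fun _ => 0 := by simpa using hc.deriv
  have : deriv (deriv f) x = 0 := by rw [h0.deriv_eq]; simp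
  linarith

theorem hasDerivAt_comp_curve {E : Type*} [NormedAddCommGroup E] [NormedSpace ℝ E] {u : E → ℝ}
    {c c' : ℝ → E} {c'' : E} {x : ℝ} (hu : ContDiffAt ℝ 2 u (c x))
    (hc : ∀ᶠ s in 𝓝 x, HasDerivAt c (c' s) s) (hc' : HasDerivAt c' c'' x) :
    (∀ᶠ s in 𝓝 x, HasDerivAt (fun s => u (c s)) (fderiv ℝ u (c s) (c' s)) s) ∧
      HasDerivAt (fun s => fderiv ℝ u (c s) (c' s))
        (fderiv ℝ (fderiv ℝ u) (c x) (c' x) (c' x) + fderiv ℝ u (c x) c'') x := by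
  have hcx := hc.self_of_nhds
  constructor
  · have h1 : ∀ᶠ q in 𝓝 (c x), ContDiffAt ℝ 2 u q := hu.eventually (by simp)
    filter_upwards [hcx.continuousAt.eventually h1, hc] with s hs hcs
    exact (hs.differentiableAt (by simp)).hasFDerivAt.comp_hasDerivAt s hcs
  · have h2 : DifferentiableAt ℝ (fderiv ℝ u) (c x) :=
      (hu.fderiv_right (m := 1) (by norm_num)).differentiableAt (by simp)
    exact (h2.hasFDerivAt.comp_hasDerivAt x hcx).clm_apply hc'

theorem exists_hasDerivAt_comp_analytic {E : Type*} [NormedAddCommGroup E] [NormedSpace ℂ E]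
    [CompleteSpace E] {u : E → ℝ} {γ : ℂ → E} {ζ : ℂ} (hu : ContDiffAt ℝ 2 u (γ ζ))
    (hγ : AnalyticAt ℂ γ ζ) :
    ∃ f' : ℝ → ℝ,
      (∀ᶠ s : ℝ in 𝓝 0, HasDerivAt (fun s : ℝ => u (γ (ζ + s)) + u (γ (ζ + s * I))) (f' s) s) ∧
      HasDerivAt f' (complexHessian u (γ ζ) (deriv γ ζ)) 0 := by
  have key : ∀ w : ℂ, ∃ f' : ℝ → ℝ,
      (∀ᶠ s : ℝ in 𝓝 0, HasDerivAt (fun s : ℝ => u (γ (ζ + s * w))) (f' s) s) ∧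
      HasDerivAt f' (fderiv ℝ (fderiv ℝ u) (γ ζ) (w • deriv γ ζ) (w • deriv γ ζ) +
        fderiv ℝ u (γ ζ) (w • w • deriv (deriv γ) ζ)) 0 := by
    intro w
    have hl : ∀ s : ℝ, HasDerivAt (fun s : ℝ => ζ + s * w) w s := fun s => by
      simpa using ((hasDerivAt_id s).ofReal_comp.mul_const w).const_add ζ
    have hl0 : Tendsto (fun s : ℝ => ζ + s * w) (𝓝 0) (𝓝 ζ) := by
      simpa [ContinuousAt] using (hl 0).continuousAt
    have hc : ∀ᶠ s : ℝ in 𝓝 0,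
        HasDerivAt (fun s : ℝ => γ (ζ + s * w)) (w • deriv γ (ζ + s * w)) s := by
      filter_upwards [hl0.eventually hγ.eventually_analyticAt] with s hs
      exact hs.differentiableAt.hasDerivAt.scomp s (hl s)
    have hc' : HasDerivAt (fun s : ℝ => w • deriv γ (ζ + s * w))
        (w • w • deriv (deriv γ) ζ) 0 := by
      have h1 : HasDerivAt (deriv γ) (deriv (deriv γ) ζ) (ζ + (0 : ℝ) * w) := by
        simpa using hγ.deriv.differentiableAt.hasDerivAt
      exact (h1.scomp (0 : ℝ) (hl 0)).const_smul w
    have := hasDerivAt_comp_curve (u := u) (c := fun s : ℝ => γ (ζ + s * w))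
      (x := 0) (by simpa using hu) hc hc'
    exact ⟨_, this.1, by simpa using this.2⟩
  obtain ⟨f, hf, hf'⟩ := key 1
  obtain ⟨g, hg, hg'⟩ := key I
  refine ⟨fun s => f s + g s, ?_, ?_⟩
  · filter_upwards [hf, hg] with s h1 h2
    simpa using h1.fun_add h2
  · have h := hf'.fun_add hg'
    simp only [one_smul, smul_smul, I_mul_I, neg_smul, map_neg] at h
    exact h.congr_deriv (by rw [complexHessian]; ring)

theorem complexHessian_normSq (q ξ : ℂ) :
    complexHessian (fun w : ℂ => ‖w‖ ^ 2) q ξ = 4 * ‖ξ‖ ^ 2 := by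
  obtain ⟨B, hB⟩ : ∃ B : ℂ →L[ℝ] ℂ →L[ℝ] ℝ, ∀ v w, B v w = inner ℝ v w :=
    ⟨innerSL ℝ, fun _ _ => rfl⟩
  have h1 : fderiv ℝ (fun w : ℂ => ‖w‖ ^ 2) = ⇑((2 : ℝ) • B) := by
    ext1 w
    rw [(hasStrictFDerivAt_norm_sq w).hasFDerivAt.fderiv]
    ext v
    simp [hB]
    ring
  rw [complexHessian, h1, ((2 : ℝ) • B).fderiv]
  simp only [smul_apply, hB, real_inner_self_eq_norm_sq, norm_mul, norm_I, one_mul, smul_eq_mul]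
  ring

theorem not_isLocalMax_of_complexHessian_nonneg {E : Type*} [NormedAddCommGroup E]
    [NormedSpace ℂ E] [CompleteSpace E] {u : E → ℝ} {γ : ℂ → E} {ζ : ℂ} {κ : ℝ}
    (hu : ContDiffAt ℝ 2 u (γ ζ)) (hγ : AnalyticAt ℂ γ ζ)
    (hpsh : ∀ ξ, 0 ≤ complexHessian u (γ ζ) ξ) (hκ : 0 < κ) (hζ : ζ ≠ 0) :
    ¬ IsLocalMax (fun z => u (γ z) + κ * ‖z⁻¹‖ ^ 2) ζ := by
  intro hmax
  obtain ⟨f, hf, hf'⟩ := exists_hasDerivAt_comp_analytic hu hγ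
  obtain ⟨g, hg, hg'⟩ := exists_hasDerivAt_comp_analytic (u := fun w : ℂ => ‖w‖ ^ 2)
    (γ := fun z => z⁻¹) (ζ := ζ) (contDiff_norm_sq ℝ).contDiffAt (analyticAt_id.inv hζ)
  have hl : ∀ w : ℂ, Tendsto (fun s : ℝ => ζ + s * w) (𝓝 0) (𝓝 ζ) := fun w => by
    have : Continuous (fun s : ℝ => ζ + s * w) := by fun_prop
    simpa using this.tendsto 0
  have hnon := nonpos_of_isLocalMax_of_hasDerivAt (x := 0)
    (f := fun s : ℝ => (u (γ (ζ + s)) + u (γ (ζ + s * I))) +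
      κ * (‖(ζ + s)⁻¹‖ ^ 2 + ‖(ζ + s * I)⁻¹‖ ^ 2))
    (f' := fun s => f s + κ * g s)
    (by filter_upwards [hf, hg] with s h1 h2 using h1.add (h2.const_mul κ))
    (hf'.add (hg'.const_mul κ))
    (by
      filter_upwards [(hl 1).eventually hmax, (hl I).eventually hmax] with s h1 h2
      simp only [mul_one] at h1
      simp only [ofReal_zero, zero_mul, add_zero]
      linarith)
  rw [complexHessian_normSq] at hnon
  have hd : deriv (fun z : ℂ => z⁻¹) ζ ≠ 0 := by simp [hζ]
  have := hpsh (deriv γ ζ)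
  have : 0 < κ * (4 * ‖deriv (fun z : ℂ => z⁻¹) ζ‖ ^ 2) := by positivity
  linarith

/-- A Hopf-type boundary estimate on the unit disc. -/
theorem le_neg_mul_of_complexHessian_nonneg {E : Type*} [NormedAddCommGroup E] [NormedSpace ℂ E]
    [CompleteSpace E] {u : E → ℝ} {γ : ℂ → E} {p : E} {ε δ κ r : ℝ}
    (hγ : DifferentiableOn ℂ γ (ball 0 1)) (hu : ContDiff ℝ 2 u)
    (hpsh : ∀ q ∈ ball p δ, ∀ ξ, 0 ≤ complexHessian u q ξ) (hδ : 0 < δ) (hε : 0 < ε)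
    (hneg : ∀ ζ ∈ ball (0 : ℂ) 1, γ ζ ∈ closedBall p δ → u (γ ζ) ≤ -ε * ‖γ ζ - p‖ ^ 2)
    (hr : 0 < r) (hfar : ∀ ζ : ℂ, ‖ζ‖ ≤ r → δ ≤ ‖γ ζ - p‖) (hκ : 0 < κ)
    (hκr : κ * (r⁻¹ ^ 2 - 1) ≤ ε * δ ^ 2) {ζ : ℂ} (hrζ : r ≤ ‖ζ‖) (hζ : ‖ζ‖ < 1)
    (hζp : γ ζ ∈ closedBall p δ) :
    u (γ ζ) ≤ -κ * (‖ζ‖⁻¹ ^ 2 - 1) := by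
  have main : ∀ R : ℝ, ‖ζ‖ < R → R < 1 → u (γ ζ) ≤ -κ * (‖ζ‖⁻¹ ^ 2 - R⁻¹ ^ 2) := by
    intro R hζR hR
    have hR0 : 0 < R := lt_of_le_of_lt (norm_nonneg _) hζR
    have hsub : closedBall (0 : ℂ) R ⊆ ball 0 1 := closedBall_subset_ball hR
    set K : Set ℂ := (closedBall 0 R ∩ γ ⁻¹' closedBall p δ) ∩ {z | r ≤ ‖z‖} with hK
    have hKc : IsCompact K := by
      have h1 : IsClosed (closedBall (0 : ℂ) R ∩ γ ⁻¹' closedBall p δ) :=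
        (hγ.continuousOn.mono hsub).preimage_isClosed_of_isClosed isClosed_closedBall
          isClosed_closedBall
      have h2 : IsClosed {z : ℂ | r ≤ ‖z‖} := isClosed_le continuous_const continuous_norm
      exact (isCompact_closedBall (0 : ℂ) R).of_isClosed_subset (h1.inter h2)
        fun z hz => hz.1.1
    have hζK : ζ ∈ K := ⟨⟨by simpa using hζR.le, hζp⟩, hrζ⟩
    have hcont : ContinuousOn (fun z => u (γ z) + κ * ‖z⁻¹‖ ^ 2) K := by
      have h1 : ContinuousOn γ K := hγ.continuousOn.mono fun z hz => hsub hz.1.1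
      have h2 : ContinuousOn (fun z : ℂ => z⁻¹) K := continuousOn_inv₀.mono fun z hz => by
        have : 0 < ‖z‖ := hr.trans_le hz.2
        simpa using this
      exact (hu.continuous.comp_continuousOn h1).add
        (continuousOn_const.mul (h2.norm.pow 2))
    obtain ⟨w, hwK, hw⟩ := hKc.exists_isMaxOn ⟨ζ, hζK⟩ hcont
    have hw0 : 0 < ‖w‖ := hr.trans_le hwK.2
    have hwζ : u (γ ζ) + κ * ‖ζ⁻¹‖ ^ 2 ≤ u (γ w) + κ * ‖w⁻¹‖ ^ 2 := hw hζK
    have huw := hneg w (hsub hwK.1.1) hwK.1.2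
    by_contra! hcon
    simp only [norm_inv] at hwζ
    have hpos : 0 < u (γ w) + κ * (‖w‖⁻¹ ^ 2 - R⁻¹ ^ 2) := by linarith
    have hwR : ‖w‖ < R := by
      refine lt_of_le_of_ne (by simpa using hwK.1.1) fun h => ?_
      rw [h] at hpos
      have : 0 ≤ ε * ‖γ w - p‖ ^ 2 := by positivity
      linarith
    have hwδ : ‖γ w - p‖ < δ := by
      by_contra! h
      have h1 : ε * δ ^ 2 ≤ ε * ‖γ w - p‖ ^ 2 := by gcongr
      have h2 : ‖w‖⁻¹ ^ 2 ≤ r⁻¹ ^ 2 := by gcongr; exact hwK.2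
      have h3 : 1 ≤ R⁻¹ ^ 2 := one_le_pow₀ ((one_le_inv₀ hR0).2 hR.le)
      have h4 : κ * (‖w‖⁻¹ ^ 2 - R⁻¹ ^ 2) ≤ κ * (r⁻¹ ^ 2 - 1) := by gcongr
      linarith
    have hwr : r < ‖w‖ := by
      by_contra! h
      exact absurd (hfar w h) (not_le.2 hwδ)
    have hwball : w ∈ ball (0 : ℂ) 1 := by simpa using hwR.trans hR
    have hγw : AnalyticAt ℂ γ w := hγ.analyticAt (isOpen_ball.mem_nhds hwball)
    refine not_isLocalMax_of_complexHessian_nonneg (κ := κ) hu.contDiffAt hγw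
      (hpsh _ (by simpa [dist_eq_norm] using hwδ)) hκ (norm_pos_iff.1 hw0) (hw.isLocalMax ?_)
    refine inter_mem (inter_mem ?_ ?_) ?_
    · exact closedBall_mem_nhds_of_mem (by simpa using hwR)
    · exact hγw.continuousAt.preimage_mem_nhds
        (closedBall_mem_nhds_of_mem (by simpa [dist_eq_norm] using hwδ))
    · exact (continuous_norm.continuousAt.eventually (lt_mem_nhds hwr)).mono fun _ h => le_of_lt h
  have hlim : Tendsto (fun R : ℝ => -κ * (‖ζ‖⁻¹ ^ 2 - R⁻¹ ^ 2)) (𝓝[<] 1)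
      (𝓝 (-κ * (‖ζ‖⁻¹ ^ 2 - (1 : ℝ)⁻¹ ^ 2))) := by
    have : ContinuousAt (fun R : ℝ => -κ * (‖ζ‖⁻¹ ^ 2 - R⁻¹ ^ 2)) 1 := by
      fun_prop (disch := norm_num)
    exact this.tendsto.mono_left nhdsWithin_le_nhds
  have := ge_of_tendsto hlim (by
    filter_upwards [Ioo_mem_nhdsLT hζ] with R hR using main R hR.1 hR.2)
  simpa using this

theorem four_mul_leviForm {n : ℕ} (u : En n → ℝ) (q ξ : En n) :
    4 * LeviForm u q ξ = complexHessian u q ξ := by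
  simp [LeviForm, complexHessian, iteratedFDeriv_two_apply]

theorem continuous_complexHessian {n : ℕ} {u : En n → ℝ} (hu : ContDiff ℝ 2 u) :
    Continuous fun x : En n × En n => complexHessian u x.1 x.2 := by
  have h : Continuous (fderiv ℝ (fderiv ℝ u)) :=
    (hu.fderiv_right (m := 1) (by norm_num)).continuous_fderiv (by simp)
  unfold complexHessian
  fun_prop

theorem complexHessian_real_smul {n : ℕ} (u : En n → ℝ) (q ξ : En n) (s : ℝ) :
    complexHessian u q (s • ξ) = s ^ 2 * complexHessian u q ξ := by
  unfold complexHessian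
  rw [smul_comm I s ξ]
  simp only [map_smul, smul_apply, smul_eq_mul]
  ring

theorem contDiff_quadratic_perturbation {n : ℕ} {ρ : En n → ℝ} (hρ : ContDiff ℝ 2 ρ)
    (p : En n) (k ε : ℝ) :
    ContDiff ℝ 2 fun q => ρ q + k * ρ q ^ 2 - ε * ‖q - p‖ ^ 2 := by
  have : ContDiff ℝ 2 fun q : En n => ‖q - p‖ ^ 2 := (contDiff_id.sub contDiff_const).norm_sq ℝ
  fun_prop

theorem complexHessian_quadratic_perturbation {n : ℕ} {ρ : En n → ℝ} (hρ : ContDiff ℝ 2 ρ)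
    {p : En n} (hp : ρ p = 0) (k ε : ℝ) (ξ : En n) :
    complexHessian (fun q => ρ q + k * ρ q ^ 2 - ε * ‖q - p‖ ^ 2) p ξ =
      complexHessian ρ p ξ + 2 * k * (fderiv ℝ ρ p ξ ^ 2 + fderiv ℝ ρ p (I • ξ) ^ 2)
        - 4 * ε * ‖ξ‖ ^ 2 := by
  obtain ⟨B, hB⟩ : ∃ B : En n →L[ℝ] En n →L[ℝ] ℝ, ∀ v w, B v w = inner ℝ v w :=
    ⟨innerSL ℝ, fun _ _ => rfl⟩
  have hd : ∀ q, HasFDerivAt ρ (fderiv ℝ ρ q) q := fun q =>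
    (hρ.differentiable (by simp) q).hasFDerivAt
  have h1 : fderiv ℝ (fun q => ρ q + k * ρ q ^ 2 - ε * ‖q - p‖ ^ 2) =
      fun q => (1 + 2 * k * ρ q) • fderiv ℝ ρ q - (2 * ε) • B (q - p) := by
    ext1 q
    have hn : HasFDerivAt (fun q : En n => ‖q - p‖ ^ 2) (2 • innerSL ℝ (q - p)) q := by
      simpa using ((hasFDerivAt_id q).sub_const p).norm_sq
    rw [(((hd q).fun_add (((hd q).pow 2).const_mul k)).fun_sub (hn.const_mul ε)).fderiv]
    ext v
    simp [hB]
    ring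
  have hdd : HasFDerivAt (fderiv ℝ ρ) (fderiv ℝ (fderiv ℝ ρ) p) p :=
    ((hρ.fderiv_right (m := 1) (by norm_num)).differentiable (by simp) p).hasFDerivAt
  have h2 := ((((hd p).const_mul (2 * k)).const_add 1).fun_smul hdd).fun_sub
    ((B.hasFDerivAt.comp p
      ((hasFDerivAt_id p).sub_const p)).fun_const_smul (2 * ε))
  simp only [comp_apply, id_eq] at h2
  unfold complexHessian
  rw [h1, h2.fderiv]
  simp only [hp, sub_apply, add_apply, smul_apply, ContinuousLinearMap.comp_apply,
    ContinuousLinearMap.smulRight_apply, ContinuousLinearMap.id_apply, hB,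
    real_inner_self_eq_norm_sq, norm_smul, norm_I, smul_eq_mul]
  ring

/-- A strongly pseudoconvex boundary point admits a local plurisubharmonic peak function. -/
theorem exists_local_psh_peak {n : ℕ} {ρ : En n → ℝ} (hρ : ContDiff ℝ 2 ρ) {p : En n}
    (hp : ρ p = 0) (hspc : StronglyPcxAt ρ p) :
    ∃ u : En n → ℝ, ContDiff ℝ 2 u ∧ u p = 0 ∧ ∃ ε > 0, ∀ᶠ q in 𝓝 p,
      (∀ ξ, 0 ≤ complexHessian u q ξ) ∧ (ρ q < 0 → u q ≤ -ε * ‖q - p‖ ^ 2) := by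
  have hcH : Continuous (complexHessian ρ p) :=
    (continuous_complexHessian hρ).comp (continuous_const.prodMk continuous_id)
  let T : En n → ℝ := fun ξ => fderiv ℝ ρ p ξ ^ 2 + fderiv ℝ ρ p (I • ξ) ^ 2
  have hT : Continuous T := by fun_prop
  let S : ℕ → Set (En n) := fun k =>
    {ξ | 0 < complexHessian ρ p ξ + 2 * ((k : ℝ) + 1) * T ξ - 4 * (1 / ((k : ℝ) + 1))}
  have hSmono : Monotone S := by
    intro k l hkl ξ hξ
    have hkl' : (k : ℝ) ≤ l := by exact_mod_cast hkl
    have h1 : 1 / ((l : ℝ) + 1) ≤ 1 / ((k : ℝ) + 1) := by gcongr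
    have h0 : 0 ≤ T ξ := by positivity
    have h2 : 2 * ((k : ℝ) + 1) * T ξ ≤ 2 * ((l : ℝ) + 1) * T ξ := by gcongr
    simp only [S, mem_ofPred_eq] at hξ ⊢
    linarith
  have hcover : sphere (0 : En n) 1 ⊆ ⋃ k, S k := by
    intro ξ hξ
    have hξ0 : ξ ≠ 0 := ne_zero_of_mem_unit_sphere ⟨ξ, hξ⟩
    have hsmall : Tendsto (fun k : ℕ => 4 * (1 / ((k : ℝ) + 1))) atTop (𝓝 0) := by
      simpa using tendsto_one_div_add_atTop_nhds_zero_nat.const_mul (4 : ℝ)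
    rw [mem_iUnion]
    by_cases h : T ξ = 0
    · have hH : 0 < complexHessian ρ p ξ := by
        rw [← four_mul_leviForm]
        have h1 : fderiv ℝ ρ p ξ = 0 := by
          by_contra h'
          have : 0 < T ξ := by positivity
          exact this.ne' h
        have h2 : fderiv ℝ ρ p (I • ξ) = 0 := by
          by_contra h'
          have : 0 < T ξ := by positivity
          exact this.ne' h
        have := hspc ξ hξ0 ⟨h1, h2⟩
        positivity
      obtain ⟨k, hk⟩ := (hsmall.eventually (gt_mem_nhds hH)).exists
      refine ⟨k, ?_⟩
      simp only [S, mem_ofPred_eq, h]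
      linarith
    · have hTpos : 0 < T ξ := lt_of_le_of_ne (by positivity) (Ne.symm h)
      obtain ⟨k, hk⟩ := exists_nat_gt ((4 - complexHessian ρ p ξ) / (2 * T ξ))
      rw [div_lt_iff₀ (by positivity)] at hk
      refine ⟨k, ?_⟩
      have : 1 / ((k : ℝ) + 1) ≤ 1 := by
        rw [div_le_one (by positivity)]
        linarith [(Nat.cast_nonneg k : (0 : ℝ) ≤ k)]
      simp only [S, mem_ofPred_eq]
      nlinarith
  obtain ⟨k, hk⟩ := (isCompact_sphere (0 : En n) 1).elim_directed_cover S
    (fun k => isOpen_lt continuous_const (by fun_prop)) hcover hSmono.directed_le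
  set ε : ℝ := 1 / ((k : ℝ) + 1) with hε
  have hε0 : 0 < ε := by positivity
  set u : En n → ℝ := fun q => ρ q + ((k : ℝ) + 1) * ρ q ^ 2 - ε * ‖q - p‖ ^ 2 with hu
  have huC : ContDiff ℝ 2 u := contDiff_quadratic_perturbation hρ p _ _
  refine ⟨u, huC, by simp [hu, hp], ε, hε0, ?_⟩
  have hopen : IsOpen {x : En n × En n | 0 < complexHessian u x.1 x.2} :=
    isOpen_lt continuous_const (continuous_complexHessian huC)
  have hev : ∀ᶠ q in 𝓝 p, ∀ ξ ∈ sphere (0 : En n) 1, 0 < complexHessian u q ξ := by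
    refine (isCompact_sphere (0 : En n) 1).eventually_forall_of_forall_eventually fun ξ hξ => ?_
    refine hopen.mem_nhds ?_
    have h1 : ‖ξ‖ = 1 := by simpa using hξ
    have h2 := hk hξ
    simp only [S, mem_ofPred_eq] at h2
    simp only [mem_ofPred_eq]
    rw [hu, complexHessian_quadratic_perturbation hρ hp, h1]
    simpa only [one_pow, mul_one] using h2
  have hsmall : ∀ᶠ q in 𝓝 p, -1 < ((k : ℝ) + 1) * ρ q := by
    have : Tendsto (fun q => ((k : ℝ) + 1) * ρ q) (𝓝 p) (𝓝 0) := by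
      have h := (hρ.continuous.const_mul ((k : ℝ) + 1)).tendsto p
      simpa [hp] using h
    exact this.eventually (lt_mem_nhds (by norm_num))
  filter_upwards [hev, hsmall] with q hq hq'
  refine ⟨fun ξ => ?_, fun hneg => ?_⟩
  · rcases eq_or_ne ξ 0 with rfl | hξ
    · simp [complexHessian]
    · have h1 : ξ = ‖ξ‖ • (‖ξ‖⁻¹ • ξ) := by
        rw [smul_inv_smul₀ (norm_ne_zero_iff.2 hξ)]
      have h2 : ‖ξ‖⁻¹ • ξ ∈ sphere (0 : En n) 1 := by
        simp [norm_smul, norm_ne_zero_iff.2 hξ]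
      rw [h1, complexHessian_real_smul]
      exact mul_nonneg (sq_nonneg _) (hq _ h2).le
  · simp only [hu]
    nlinarith

theorem exists_ball_norm_taylor_le {E : Type*} [NormedAddCommGroup E] [NormedSpace ℝ E]
    {f : E → ℝ} (hf : ContDiff ℝ 2 f) (p : E) :
    ∃ C > 0, ∃ δ > 0, ∀ h : E, ‖h‖ < δ → |f (p + h) - f p - fderiv ℝ f p h| ≤ C * ‖h‖ ^ 2 := by
  obtain ⟨K, s, hs, hK⟩ :=
    ((hf.fderiv_right (m := 1) (by norm_num)).contDiffAt (x := p)).exists_lipschitzOnWith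
  obtain ⟨δ, hδ, hδs⟩ := Metric.mem_nhds_iff.1 hs
  refine ⟨K + 1, by positivity, δ, hδ, fun h hh => ?_⟩
  have hp : p ∈ s := hδs (mem_ball_self hδ)
  have := (convex_closedBall p ‖h‖).norm_image_sub_le_of_norm_fderiv_le' (𝕜 := ℝ) (f := f)
    (φ := fderiv ℝ f p) (C := K * ‖h‖) (x := p) (y := p + h)
    (fun x _ => hf.differentiable (by simp) x)
    (fun x hx => by
      have hx' : ‖x - p‖ ≤ ‖h‖ := by simpa [dist_eq_norm] using hx
      have hxs : x ∈ s := hδs (by simpa [dist_eq_norm] using hx'.trans_lt hh)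
      have := hK.norm_sub_le hxs hp
      exact this.trans (by gcongr))
    (by simp) (by simp)
  simp only [add_sub_cancel_left, Real.norm_eq_abs] at this
  refine this.trans ?_
  nlinarith [sq_nonneg ‖h‖]

/-- Discs in the normal direction, internally tangent to the boundary at `p`. -/
theorem exists_internally_tangent_discs {n : ℕ} {ρ : En n → ℝ} (hρ : ContDiff ℝ 2 ρ) {p : En n}
    (hp : ρ p = 0) (hd : fderiv ℝ ρ p ≠ 0) :
    ∃ ν : En n, ∀ᶠ t : ℝ in 𝓝[>] 0, ∀ ζ ∈ ball (0 : ℂ) 1, ρ (p + ((t : ℂ) * (1 - ζ)) • ν) < 0 := by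
  obtain ⟨C, hC, δ, hδ, hT⟩ := exists_ball_norm_taylor_le hρ p
  obtain ⟨v, hv⟩ : ∃ v, fderiv ℝ ρ p v ≠ 0 := by
    by_contra! h
    exact hd (ContinuousLinearMap.ext h)
  have hlin : ∀ (w : ℂ) (x : En n), fderiv ℝ ρ p (w • x) =
      w.re * fderiv ℝ ρ p x + w.im * fderiv ℝ ρ p (I • x) := by
    intro w x
    have : w • x = w.re • x + w.im • (I • x) := by
      conv_lhs => rw [← re_add_im w]
      rw [add_smul, mul_smul]
      simp only [coe_smul]
    rw [this, map_add, map_smul, map_smul]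
    simp
  set a := fderiv ℝ ρ p v with ha
  set b := fderiv ℝ ρ p (I • v) with hb
  have hab : 0 < a ^ 2 + b ^ 2 := by positivity
  set ν : En n := (⟨-a, -b⟩ / (a ^ 2 + b ^ 2 : ℝ) : ℂ) • v with hν
  have hν1 : ∀ w : ℂ, fderiv ℝ ρ p (w • ν) = -w.re := by
    intro w
    rw [hν, smul_smul, hlin, ← ha, ← hb]
    simp only [mul_re, mul_im, div_ofReal_re, div_ofReal_im]
    field_simp
    ring
  refine ⟨ν, ?_⟩
  have h1 : ∀ᶠ t : ℝ in 𝓝[>] 0, t * (2 * ‖ν‖) < δ := by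
    have : Tendsto (fun t : ℝ => t * (2 * ‖ν‖)) (𝓝 0) (𝓝 0) := by
      simpa using (continuous_id.mul_const (2 * ‖ν‖)).tendsto (0 : ℝ)
    exact (this.mono_left nhdsWithin_le_nhds).eventually (gt_mem_nhds hδ)
  have h2 : ∀ᶠ t : ℝ in 𝓝[>] 0, t * (2 * C * ‖ν‖ ^ 2) < 1 := by
    have : Tendsto (fun t : ℝ => t * (2 * C * ‖ν‖ ^ 2)) (𝓝 0) (𝓝 0) := by
      simpa using (continuous_id.mul_const (2 * C * ‖ν‖ ^ 2)).tendsto (0 : ℝ)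
    exact (this.mono_left nhdsWithin_le_nhds).eventually (gt_mem_nhds one_pos)
  filter_upwards [h1, h2, self_mem_nhdsWithin] with t ht1 ht2 ht0 ζ hζ
  have ht0 : 0 < t := ht0
  have hζ1 : ‖ζ‖ < 1 := by simpa using hζ
  have hre : 0 < 1 - ζ.re := by linarith [(abs_le.1 (abs_re_le_norm ζ)).2]
  have hsq : ‖1 - ζ‖ ^ 2 ≤ 2 * (1 - ζ.re) := by
    have h3 : ‖ζ‖ ^ 2 ≤ 1 := pow_le_one₀ (norm_nonneg _) hζ1.le
    rw [← normSq_eq_norm_sq, normSq_apply] at h3 ⊢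
    simp
    nlinarith
  have hn2 : ‖1 - ζ‖ ≤ 2 := (norm_sub_le _ _).trans (by norm_num; linarith)
  have hnorm : ‖((t : ℂ) * (1 - ζ)) • ν‖ = t * ‖1 - ζ‖ * ‖ν‖ := by
    rw [norm_smul, norm_mul, norm_real, Real.norm_of_nonneg ht0.le]
  have hlt : ‖((t : ℂ) * (1 - ζ)) • ν‖ < δ := by
    rw [hnorm]
    refine lt_of_le_of_lt ?_ ht1
    rw [mul_assoc]
    gcongr
  have h := (abs_le.1 (hT _ hlt)).2
  rw [hp, hν1, hnorm] at h
  have hre' : ((t : ℂ) * (1 - ζ)).re = t * (1 - ζ.re) := by simp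
  rw [hre'] at h
  have h5 : C * (t * ‖1 - ζ‖ * ‖ν‖) ^ 2 ≤ C * t ^ 2 * ‖ν‖ ^ 2 * (2 * (1 - ζ.re)) := by
    calc C * (t * ‖1 - ζ‖ * ‖ν‖) ^ 2 = C * t ^ 2 * ‖ν‖ ^ 2 * ‖1 - ζ‖ ^ 2 := by ring
      _ ≤ _ := by gcongr
  have h6 : 0 < t * (1 - ζ.re) * (1 - t * (2 * C * ‖ν‖ ^ 2)) :=
    mul_pos (mul_pos ht0 hre) (by linarith)
  nlinarith

open Asymptotics in
theorem LittleOh.iterate_isLittleO {n : ℕ} {Ω : Set (En n)} {F : En n → En n} {p : En n}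
    (hFself : MapsTo F Ω Ω) (hp : p ∉ Ω) (ho : LittleOh Ω F p 1) (m : ℕ) :
    (fun z => F^[m] z - z) =o[𝓝[Ω] p] fun z => z - p := by
  have h1 : (fun z => F z - z) =o[𝓝[Ω] p] fun z => z - p := by
    rw [← isLittleO_norm_norm, isLittleO_iff_tendsto']
    · simpa [LittleOh] using ho
    · filter_upwards [self_mem_nhdsWithin] with z hz h
      rw [norm_eq_zero, sub_eq_zero] at h
      exact absurd (h ▸ hz) hp
  have h2 : (fun z => F z - p) =O[𝓝[Ω] p] fun z => z - p := by
    simpa using h1.isBigO.add (isBigO_refl (fun z => z - p) (𝓝[Ω] p))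
  have h3 : Tendsto F (𝓝[Ω] p) (𝓝[Ω] p) := by
    refine tendsto_nhdsWithin_iff.2 ⟨?_, ?_⟩
    · have h0 : Tendsto (fun z => z - p) (𝓝[Ω] p) (𝓝 0) := by
        have : Continuous fun z : En n => z - p := by fun_prop
        simpa using (this.tendsto p).mono_left (nhdsWithin_le_nhds (s := Ω))
      exact tendsto_sub_nhds_zero_iff.1 (h2.trans_tendsto h0)
    · filter_upwards [self_mem_nhdsWithin] with z hz using hFself hz
  induction m with
  | zero => simp
  | succ m ih =>
    have := ((ih.comp_tendsto h3).trans_isBigO h2).add h1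
    simpa [comp_def] using this

theorem orbits_stay_near_boundary_point
    {n : ℕ} (hn : 2 ≤ n) (Ω : Set (En n)) (ρ : En n → ℝ)
    (hΩ : IsDomain' Ω) (hbd : Bornology.IsBounded Ω)
    (hρ : IsPcxCinfBoundary Ω ρ)
    (p : En n) (hp : p ∈ frontier Ω) (hspc : StronglyPcxAt ρ p)
    (F : En n → En n) (hF : DifferentiableOn ℂ F Ω) (hFself : MapsTo F Ω Ω)
    (ho : LittleOh Ω F p 1) :
    ∀ V ∈ 𝓝 p, ∃ z ∈ V ∩ Ω, ∀ m : ℕ, 1 ≤ m → F^[m] z ∈ V := by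
  intro V hV
  obtain ⟨⟨hρC, hΩρ, hfr, hd⟩, -⟩ := hρ
  have hρ2 : ContDiff ℝ 2 ρ := contDiff_infty.1 hρC 2
  have hρp : ρ p = 0 := by simpa [hfr] using hp
  have hmem : ∀ q, q ∈ Ω ↔ ρ q < 0 := fun q => by rw [hΩρ]; rfl
  have hpΩ : p ∉ Ω := by rw [hmem, hρp]; exact lt_irrefl _
  obtain ⟨u, huC, hup, ε, hε, hloc⟩ := exists_local_psh_peak hρ2 hρp hspc
  obtain ⟨C, hC, hCu⟩ : ∃ C > 0, ∀ᶠ q in 𝓝 p, ‖u q - u p‖ ≤ C * ‖q - p‖ :=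
    (huC.differentiable (by simp) p).isBigO_sub.exists_pos.imp fun C h => ⟨h.1, h.2.bound⟩
  obtain ⟨δ₀, hδ₀, hδ⟩ := Metric.nhds_basis_closedBall.eventually_iff.1
    (hloc.and (hCu.and hV))
  set δ := δ₀ / 2 with hδdef
  have hδ0 : 0 < δ := by positivity
  obtain ⟨ν, hν⟩ := exists_internally_tangent_discs hρ2 hρp (hd p hp)
  obtain ⟨M, hM, hMΩ⟩ : ∃ M > 0, ∀ x ∈ Ω, ∀ y ∈ Ω, dist x y < M := by
    obtain ⟨M, hM⟩ := Metric.isBounded_iff.1 hbd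
    exact ⟨|M| + 1, by positivity, fun x hx y hy =>
      (hM hx hy).trans_lt (by linarith [le_abs_self M])⟩
  set r := min (δ / M) (1 / 2) with hrdef
  have hr0 : 0 < r := by positivity
  have hr1 : r < 1 := (min_le_right _ _).trans_lt (by norm_num)
  set κ := ε * δ ^ 2 * r ^ 2 with hκdef
  have hκ0 : 0 < κ := by positivity
  have hκr : κ * (r⁻¹ ^ 2 - 1) ≤ ε * δ ^ 2 := by
    have : κ * (r⁻¹ ^ 2 - 1) = ε * δ ^ 2 * (1 - r ^ 2) := by
      rw [hκdef]
      field_simp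
    rw [this]
    have : 0 ≤ ε * δ ^ 2 * r ^ 2 := by positivity
    linarith
  have hsmall : ∀ᶠ t : ℝ in 𝓝[>] 0, C * (2 * t * ‖ν‖) < κ := by
    have hc : Continuous fun t : ℝ => C * (2 * t * ‖ν‖) := by fun_prop
    have : Tendsto (fun t : ℝ => C * (2 * t * ‖ν‖)) (𝓝[>] 0) (𝓝 0) := by
      simpa using (hc.tendsto 0).mono_left (nhdsWithin_le_nhds (s := Ioi 0))
    exact this.eventually (gt_mem_nhds hκ0)
  have hzV : ∀ᶠ t : ℝ in 𝓝[>] 0, p + (t : ℂ) • ν ∈ V := by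
    have hc : Continuous fun t : ℝ => p + (t : ℂ) • ν := by fun_prop
    have : Tendsto (fun t : ℝ => p + (t : ℂ) • ν) (𝓝[>] 0) (𝓝 p) := by
      simpa using (hc.tendsto 0).mono_left (nhdsWithin_le_nhds (s := Ioi 0))
    exact this.eventually hV
  obtain ⟨t, hdisc, htκ, htV, ht0⟩ :=
    (hν.and (hsmall.and (hzV.and self_mem_nhdsWithin))).exists
  have ht0 : 0 < t := ht0
  set φ : ℂ → En n := fun ζ => p + ((t : ℂ) * (1 - ζ)) • ν with hφ
  have hφΩ : MapsTo φ (ball 0 1) Ω := fun ζ hζ => (hmem _).2 (hdisc ζ hζ)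
  have hφ0 : φ 0 = p + (t : ℂ) • ν := by simp [hφ]
  have hφd : Differentiable ℂ φ := by fun_prop
  refine ⟨p + (t : ℂ) • ν, ⟨htV, hφ0 ▸ hφΩ (mem_ball_self one_pos)⟩, fun m _ => ?_⟩
  by_contra hout
  have hFm : DifferentiableOn ℂ F^[m] Ω := hF.iterate hFself m
  have hγd : DifferentiableOn ℂ (fun ζ => F^[m] (φ ζ)) (ball 0 1) :=
    hFm.comp hφd.differentiableOn hφΩ
  have hγΩ : ∀ ζ ∈ ball (0 : ℂ) 1, F^[m] (φ ζ) ∈ Ω := fun ζ hζ => hFself.iterate m (hφΩ hζ)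
  have hγ0 : δ₀ < ‖F^[m] (φ 0) - p‖ := by
    by_contra! h
    exact hout (hφ0 ▸ (hδ (x := F^[m] (φ 0)) (by simpa [dist_eq_norm] using h)).2.2)
  have hfar : ∀ ζ : ℂ, ‖ζ‖ ≤ r → δ ≤ ‖F^[m] (φ ζ) - p‖ := by
    intro ζ hζ
    have h1 : dist (F^[m] (φ ζ)) (F^[m] (φ 0)) ≤ M / 1 * dist ζ 0 :=
      dist_le_div_mul_dist_of_mapsTo_ball hγd
        (fun w hw => ball_subset_closedBall (hMΩ _ (hγΩ w hw) _ (hγΩ 0 (mem_ball_self one_pos))))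
        (by simpa using hζ.trans_lt hr1)
    rw [div_one, dist_zero_right, dist_comm, dist_eq_norm] at h1
    have h2 : M * ‖ζ‖ ≤ δ := by
      have : ‖ζ‖ ≤ δ / M := hζ.trans (min_le_left _ _)
      rwa [le_div_iff₀' hM] at this
    have h3 := norm_sub_le_norm_sub_add_norm_sub (F^[m] (φ 0)) (F^[m] (φ ζ)) p
    linarith
  have hδle : δ ≤ δ₀ := by linarith
  have hpsh : ∀ q ∈ ball p δ, ∀ ξ, 0 ≤ complexHessian u q ξ := fun q hq =>
    (hδ (closedBall_subset_closedBall hδle (ball_subset_closedBall hq))).1.1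
  have hneg : ∀ ζ ∈ ball (0 : ℂ) 1, F^[m] (φ ζ) ∈ closedBall p δ →
      u (F^[m] (φ ζ)) ≤ -ε * ‖F^[m] (φ ζ) - p‖ ^ 2 := fun ζ hζ h =>
    (hδ (closedBall_subset_closedBall hδle h)).1.2 ((hmem _).1 (hγΩ ζ hζ))
  have hφlim : Tendsto (fun x : ℝ => φ x) (𝓝[<] 1) (𝓝[Ω] p) := by
    refine tendsto_nhdsWithin_iff.2 ⟨?_, ?_⟩
    · have hc : Continuous fun x : ℝ => φ x := by fun_prop
      simpa [hφ] using (hc.tendsto 1).mono_left (nhdsWithin_le_nhds (s := Iio 1))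
    · filter_upwards [Ioo_mem_nhdsLT (zero_lt_one (α := ℝ))] with x hx
      exact hφΩ (by simpa [abs_of_pos hx.1] using hx.2)
  have hnear : ∀ᶠ x : ℝ in 𝓝[<] 1, ‖F^[m] (φ x) - p‖ ≤ 2 * t * ‖ν‖ * (1 - x) := by
    have hb := hφlim.eventually ((ho.iterate_isLittleO hFself hpΩ m).bound one_pos)
    filter_upwards [hb, self_mem_nhdsWithin] with x hx hx1
    have hx1 : x < 1 := hx1
    have h1 : ‖φ x - p‖ = t * (1 - x) * ‖ν‖ := by
      have : ((t : ℂ) * (1 - x)) = ((t * (1 - x) : ℝ) : ℂ) := by push_cast; ring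
      rw [hφ]
      simp only [add_sub_cancel_left]
      rw [this, norm_smul, norm_real, Real.norm_of_nonneg (by nlinarith)]
    have h2 := norm_sub_le_norm_sub_add_norm_sub (F^[m] (φ x)) (φ x) p
    linarith
  have hlt : ∀ᶠ x : ℝ in 𝓝[<] 1, 2 * t * ‖ν‖ * (1 - x) < δ := by
    have hc : Continuous fun x : ℝ => 2 * t * ‖ν‖ * (1 - x) := by fun_prop
    have : Tendsto (fun x : ℝ => 2 * t * ‖ν‖ * (1 - x)) (𝓝[<] 1) (𝓝 0) := by
      simpa using (hc.tendsto 1).mono_left (nhdsWithin_le_nhds (s := Iio 1))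
    exact this.eventually (gt_mem_nhds hδ0)
  obtain ⟨x, hx1, hx2, hxr, hx⟩ := (hnear.and (hlt.and (Ioo_mem_nhdsLT hr1))).exists
  have hx0 : 0 < x := hr0.trans hxr
  have hxn : ‖(x : ℂ)‖ = x := by simp [abs_of_pos hx0]
  have hball : F^[m] (φ x) ∈ closedBall p δ := by
    simpa [dist_eq_norm] using hx1.trans hx2.le
  have hupper := le_neg_mul_of_complexHessian_nonneg hγd huC hpsh hδ0 hε hneg hr0 hfar hκ0 hκr
    (ζ := x) (by rw [hxn]; exact hxr.le) (by rw [hxn]; exact hx) hball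
  rw [hxn] at hupper
  have hlower := (hδ (closedBall_subset_closedBall hδle hball)).2.1
  rw [hup, sub_zero, Real.norm_eq_abs] at hlower
  have h1 : 1 - x ≤ x⁻¹ ^ 2 - 1 := by
    have : 1 ≤ x⁻¹ := (one_le_inv₀ hx0).2 hx.le
    have h2 : 1 ≤ x⁻¹ ^ 2 := one_le_pow₀ this
    have h3 : x * x⁻¹ = 1 := mul_inv_cancel₀ hx0.ne'
    nlinarith
  have h2 : κ * (1 - x) ≤ κ * (x⁻¹ ^ 2 - 1) := by gcongr
  have h3 : C * ‖F^[m] (φ x) - p‖ ≤ C * (2 * t * ‖ν‖ * (1 - x)) := by gcongr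
  have h4 := (abs_le.1 hlower).1
  have h5 : C * (2 * t * ‖ν‖) * (1 - x) < κ * (1 - x) := by
    have : 0 < 1 - x := by linarith
    gcongr
  linarith
end
end

section
/- Let Ω be a bounded domain in ℂⁿ, n ≥ 2, and let Δ be the open unit disk in ℂ. Let φ : Δ → Ω be a proper holomorphic map (preimages of compact subsets of Ω are compact) which, for some δ > 0, is Lipschitz continuous on Δ ∩ {|ζ−1| < δ} and extends continuously to ζ = 1 with φ(1) = p ∈ ∂Ω. Suppose there exist a neighborhood U of p in ℂⁿ and a C¹ function ρ : U → ℝ with dρ ≠ 0 on U, Ω ∩ U = {z ∈ U : ρ(z) < 0} and ∂Ω ∩ U = {z ∈ U : ρ(z) = 0}, such that ρ ∘ φ is subharmonic on the open set φ⁻¹(U) ⊆ Δ. If F : Ω → Ω is a holomorphic map with F(φ(ζ)) = φ(ζ) for all ζ ∈ Δ and F(z) = z + o(‖z−p‖²) as z → p within Ω, then F(z) = z for all z ∈ Ω. -/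
open Complex Topology Filter Metric Set Function

noncomputable section

section Holomorphic

variable {E E' : Type*} [NormedAddCommGroup E] [NormedSpace ℂ E]
  [NormedAddCommGroup E'] [NormedSpace ℂ E']

/-- Second order Taylor estimate for a bounded holomorphic map on a ball. -/
theorem norm_sub_sub_fderiv_le_of_norm_le {f : E → E'} {z w : E} {r M : ℝ}
    (hf : DifferentiableOn ℂ f (ball z r)) (hM : ∀ x ∈ ball z r, ‖f x‖ ≤ M) (hw : ‖w‖ < r) :
    ‖f (z + w) - f z - fderiv ℂ f z w‖ ≤ 4 * M * (‖w‖ / r) ^ 2 := by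
  have hr : 0 < r := (norm_nonneg w).trans_lt hw
  have hz : z ∈ ball z r := mem_ball_self hr
  have hfz : DifferentiableAt ℂ f z := hf.differentiableAt (ball_mem_nhds z hr)
  have hdist : ∀ x ∈ ball z r, ‖f x - f z‖ ≤ 2 * M := fun x hx => by
    linarith [norm_sub_le (f x) (f z), hM x hx, hM z hz]
  have hder : ‖fderiv ℂ f z‖ ≤ 2 * M / r :=
    norm_fderiv_le_div_of_mapsTo_ball hf
      (fun x hx => by simpa [dist_eq_norm_sub] using hdist x hx) hr
  have hM0 : 0 ≤ M := (norm_nonneg _).trans (hM z hz)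
  have key := dist_le_mul_div_pow_of_mapsTo_ball_of_isLittleO (n := 1) (R₂ := 4 * M)
    (f := fun x => f x - fderiv ℂ f z (x - z)) (c := z) (z := z + w) (R₁ := r)
    (by fun_prop) ?_ ?_ (by simpa using hw)
  · have e : f (z + w) - f z - fderiv ℂ f z w = f (z + w) - fderiv ℂ f z w - f z := by abel
    simpa [dist_eq_norm_sub, e] using key
  · intro x hx
    have h1 : ‖fderiv ℂ f z (x - z)‖ ≤ 2 * M := by
      refine ((fderiv ℂ f z).le_of_opNorm_le hder _).trans ?_
      have : ‖x - z‖ ≤ r := by simpa [dist_eq_norm_sub] using (mem_ball.1 hx).le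
      calc 2 * M / r * ‖x - z‖ ≤ 2 * M / r * r := by gcongr
        _ = 2 * M := by field_simp
    have h2 := norm_sub_le (f x - f z) (fderiv ℂ f z (x - z))
    have e : f x - fderiv ℂ f z (x - z) - f z = f x - f z - fderiv ℂ f z (x - z) := by abel
    simp only [mem_closedBall, dist_eq_norm_sub, sub_self, map_zero, sub_zero, e]
    linarith [hdist x hx]
  · have := hfz.hasFDerivAt.isLittleO
    simp only [sub_self, map_zero, sub_zero, pow_one]
    refine (this.congr_left fun x => by abel).norm_right

/-- The derivative of a bounded holomorphic map, in a fixed direction and along a holomorphic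
curve, is holomorphic. -/
theorem differentiableOn_fderiv_comp_apply [CompleteSpace E'] {f : E → E'} {Ω : Set E}
    (hΩ : IsOpen Ω) (hf : DifferentiableOn ℂ f Ω) {M : ℝ} (hM : ∀ x ∈ Ω, ‖f x‖ ≤ M)
    {φ : ℂ → E} {D : Set ℂ} (hD : IsOpen D) (hφ : DifferentiableOn ℂ φ D)
    (hφΩ : MapsTo φ D Ω) (v : E) :
    DifferentiableOn ℂ (fun ζ => fderiv ℂ f (φ ζ) v) D := by
  intro ζ₀ hζ₀
  obtain ⟨r, hr, hball⟩ := Metric.isOpen_iff.1 hΩ _ (hφΩ hζ₀)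
  have hM0 : 0 ≤ M := (norm_nonneg _).trans (hM _ (hφΩ hζ₀))
  set V : Set ℂ := D ∩ φ ⁻¹' ball (φ ζ₀) (r / 2)
  have hVo : IsOpen V := hφ.continuousOn.isOpen_inter_preimage hD isOpen_ball
  have hζV : ζ₀ ∈ V := ⟨hζ₀, by simpa using hr⟩
  have hsub : ∀ ζ ∈ V, ball (φ ζ) (r / 2) ⊆ Ω := fun ζ hζ => by
    refine Subset.trans (ball_subset_ball' ?_) hball
    have : dist (φ ζ) (φ ζ₀) < r / 2 := hζ.2
    linarith
  have hsmall : ∀ η > 0, ∀ᶠ t : ℂ in 𝓝[≠] 0, ‖t • v‖ < η := fun η hη => by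
    have : Tendsto (fun t : ℂ => ‖t • v‖) (𝓝[≠] 0) (𝓝 0) := by
      have h : Continuous fun t : ℂ => ‖t • v‖ := by fun_prop
      simpa using (h.tendsto 0).mono_left nhdsWithin_le_nhds
    exact this.eventually (gt_mem_nhds hη)
  have hlim : TendstoLocallyUniformlyOn
      (fun (t : ℂ) ζ => t⁻¹ • (f (φ ζ + t • v) - f (φ ζ)))
      (fun ζ => fderiv ℂ f (φ ζ) v) (𝓝[≠] 0) V := by
    refine TendstoUniformlyOn.tendstoLocallyUniformlyOn (Metric.tendstoUniformlyOn_iff.2 ?_)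
    intro ε hε
    have hC : Tendsto (fun t : ℂ => 4 * M * (‖v‖ / (r / 2)) ^ 2 * ‖t‖) (𝓝[≠] 0) (𝓝 0) := by
      have h : Continuous fun t : ℂ => 4 * M * (‖v‖ / (r / 2)) ^ 2 * ‖t‖ := by fun_prop
      simpa using (h.tendsto 0).mono_left nhdsWithin_le_nhds
    filter_upwards [hsmall (r / 2) (by positivity), hC.eventually (gt_mem_nhds hε),
      self_mem_nhdsWithin] with t ht htε ht0 ζ hζ
    have ht0 : t ≠ 0 := ht0
    have h := norm_sub_sub_fderiv_le_of_norm_le (hf.mono (hsub ζ hζ))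
      (fun x hx => hM x (hsub ζ hζ hx)) ht
    have e : fderiv ℂ f (φ ζ) v - t⁻¹ • (f (φ ζ + t • v) - f (φ ζ)) =
        -(t⁻¹ • (f (φ ζ + t • v) - f (φ ζ) - fderiv ℂ f (φ ζ) (t • v))) := by
      rw [map_smul, smul_sub t⁻¹ _ (t • _), inv_smul_smul₀ ht0]; abel
    rw [dist_eq_norm_sub, e, norm_neg, norm_smul, norm_inv]
    refine lt_of_le_of_lt ?_ htε
    have htn : 0 < ‖t‖ := norm_pos_iff.2 ht0
    rw [inv_mul_le_iff₀ htn]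
    refine h.trans_eq ?_
    rw [norm_smul]; ring
  have hdiff : DifferentiableOn ℂ (fun ζ => fderiv ℂ f (φ ζ) v) V := by
    refine hlim.differentiableOn ?_ hVo
    filter_upwards [hsmall (r / 2) (by positivity)] with t ht
    have hφV : DifferentiableOn ℂ φ V := hφ.mono inter_subset_left
    refine DifferentiableOn.const_smul (DifferentiableOn.sub ?_ ?_) _
    · exact hf.comp (hφV.add_const _) fun ζ hζ => hsub ζ hζ (by simpa using ht)
    · exact hf.comp hφV fun ζ hζ => hφΩ hζ.1
  exact (hdiff.differentiableAt (hVo.mem_nhds hζV)).differentiableWithinAt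

end Holomorphic

section Subharmonic

open Real in
/-- Maximum principle for continuous functions with the sub-mean-value property. -/
theorem nonpos_of_le_circleAverage {K : Set ℂ} {w : ℂ → ℝ} (hK : IsCompact K)
    (hw : ContinuousOn w K)
    (hsub : ∀ b r, 0 < r → closedBall b r ⊆ K → w b ≤ circleAverage w b r)
    (hbd : ∀ z ∈ frontier K, w z ≤ 0) : ∀ z ∈ K, w z ≤ 0 := by
  by_contra! hcon
  obtain ⟨z, hzK, hz⟩ := hcon
  obtain ⟨m, hmK, hm⟩ := hK.exists_isMaxOn ⟨z, hzK⟩ hw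
  have hwm : 0 < w m := hz.trans_le (hm hzK)
  have hK' : IsCompact (K ∩ w ⁻¹' {w m}) :=
    hK.of_isClosed_subset (hw.preimage_isClosed_of_isClosed hK.isClosed isClosed_singleton)
      inter_subset_left
  obtain ⟨b, ⟨hbK, hb⟩, hbmax⟩ :=
    hK'.exists_isMaxOn ⟨m, hmK, rfl⟩ Complex.continuous_re.continuousOn
  have hb : w b = w m := hb
  have hbint : b ∈ interior K := by
    by_contra h
    exact absurd (hbd b ⟨subset_closure hbK, h⟩) (by rw [hb]; exact hwm.not_ge)
  obtain ⟨r, hr, hrK⟩ := Metric.nhds_basis_closedBall.mem_iff.1 (mem_interior_iff_mem_nhds.1 hbint)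
  have hmem : ∀ θ, circleMap b r θ ∈ K := fun θ =>
    hrK (sphere_subset_closedBall (circleMap_mem_sphere b hr.le θ))
  have hlt : circleAverage w b r < w m := by
    have hcont : Continuous fun θ => w (circleMap b r θ) :=
      hw.comp_continuous (continuous_circleMap b r) hmem
    have h0 : w (circleMap b r 0) < w m := by
      refine lt_of_le_of_ne (hm (hmem 0)) fun h => ?_
      have := hbmax (show circleMap b r 0 ∈ K ∩ w ⁻¹' {w m} from ⟨hmem 0, h⟩)
      simp [circleMap] at this
      linarith
    have hintegral : ∫ θ in (0 : ℝ)..2 * π, w (circleMap b r θ) < ∫ _ in (0 : ℝ)..2 * π, w m :=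
      intervalIntegral.integral_lt_integral_of_continuousOn_of_le_of_exists_lt two_pi_pos
        hcont.continuousOn continuousOn_const (fun θ _ => hm (hmem θ))
        ⟨0, ⟨le_rfl, two_pi_pos.le⟩, h0⟩
    rw [intervalIntegral.integral_const, sub_zero, smul_eq_mul] at hintegral
    rw [circleAverage, smul_eq_mul, inv_mul_lt_iff₀ two_pi_pos]
    exact hintegral
  exact absurd (hsub b r hr hrK) (by rw [hb]; exact hlt.not_ge)

open Real in
/-- Hopf's boundary lemma on a disk. -/
theorem exists_le_neg_mul_of_le_circleAverage {u : ℂ → ℝ} {a : ℂ} {s : ℝ} (hs : 0 < s)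
    (hc : ContinuousOn u (ball a s))
    (hsub : ∀ b r, 0 < r → closedBall b r ⊆ ball a s → u b ≤ circleAverage u b r)
    (hle : ∀ z ∈ ball a s, u z ≤ 0) (ha : u a < 0) :
    ∃ c > 0, ∃ t < s, ∀ z, t ≤ dist z a → dist z a < s → u z ≤ -(c * (s - dist z a)) := by
  have hnear : ∀ᶠ z in 𝓝 a, u z < u a / 2 ∧ z ∈ ball a s :=
    ((hc.continuousAt (ball_mem_nhds a hs)).eventually (gt_mem_nhds (by linarith))).and
      (ball_mem_nhds a hs)
  obtain ⟨t₀, ht₀, hball⟩ := Metric.nhds_basis_closedBall.eventually_iff.1 hnear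
  obtain ⟨t, ht, htt, hts⟩ : ∃ t, 0 < t ∧ t ≤ t₀ ∧ t < s :=
    ⟨min t₀ (s / 2), by positivity, min_le_left _ _, (min_le_right _ _).trans_lt (by linarith)⟩
  have hlog : 0 < Real.log s - Real.log t := sub_pos.2 (log_lt_log ht hts)
  set ε : ℝ := -(u a / 2) / (Real.log s - Real.log t) with hε
  have hεpos : 0 < ε := div_pos (by linarith) hlog
  have hεmul : ε * (Real.log s - Real.log t) = -(u a / 2) := div_mul_cancel₀ _ hlog.ne'
  have barrier : ∀ R, t < R → R < s → ∀ z, t ≤ dist z a → dist z a ≤ R →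
      u z ≤ ε * (Real.log (dist z a) - Real.log R) := by
    intro R htR hRs z hz1 hz2
    set K : Set ℂ := closedBall a R ∩ {y | t ≤ dist y a}
    have hKc : IsCompact K :=
      (isCompact_closedBall a R).inter_right (isClosed_le continuous_const (by fun_prop))
    have hKs : K ⊆ ball a s := fun x hx => mem_ball.2 ((mem_closedBall.1 hx.1).trans_lt hRs)
    have hne : ∀ x ∈ K, x - a ≠ 0 := fun x hx h => by
      have h1 : t ≤ dist x a := hx.2
      rw [dist_eq_norm_sub, h, norm_zero] at h1
      linarith
    have hlogc : ContinuousOn (fun x : ℂ => Real.log ‖x - a‖) K :=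
      ContinuousOn.log (by fun_prop) fun x hx => norm_ne_zero_iff.2 (hne x hx)
    have hwc : ContinuousOn (fun x : ℂ => u x - ε * (Real.log ‖x - a‖ - Real.log R)) K := by
      have := hc.mono hKs
      fun_prop
    have := nonpos_of_le_circleAverage
      (w := fun x => u x - ε * (Real.log ‖x - a‖ - Real.log R)) hKc hwc
      ?_ ?_ z ⟨hz2, hz1⟩
    · rw [dist_eq_norm_sub]; linarith
    · intro b r hr hbK
      have hb := hbK (mem_closedBall_self hr.le)
      have hlogavg : circleAverage (fun x : ℂ => Real.log ‖x - a‖) b r = Real.log ‖b - a‖ := by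
        refine InnerProductSpace.HarmonicOnNhd.circleAverage_eq fun x hx => ?_
        rw [abs_of_pos hr] at hx
        exact AnalyticAt.harmonicAt_log_norm (f := fun x => x - a) (by fun_prop) (hne x (hbK hx))
      have hsph : sphere b |r| ⊆ K := by
        rw [abs_of_pos hr]; exact sphere_subset_closedBall.trans hbK
      have hi1 : CircleIntegrable u b r := (hc.mono (hsph.trans hKs)).circleIntegrable'
      have hi2 : CircleIntegrable (fun x : ℂ => Real.log ‖x - a‖) b r :=
        (hlogc.mono hsph).circleIntegrable'
      have e : circleAverage (fun x => u x - ε * (Real.log ‖x - a‖ - Real.log R)) b r =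
          circleAverage u b r - ε * (Real.log ‖b - a‖ - Real.log R) := by
        have hi3 : CircleIntegrable (fun _ : ℂ => Real.log R) b r := circleIntegrable_const _ _ _
        have h1 := circleAverage_sub hi1 ((hi2.sub hi3).const_smul (a := ε))
        have h2 := circleAverage_sub hi2 hi3
        rw [circleAverage_smul, h2, hlogavg, circleAverage_const] at h1
        exact h1
      rw [e]
      linarith [hsub b r hr (hbK.trans hKs)]
    · intro x hx
      have hxK : x ∈ K := hKc.isClosed.frontier_subset hx
      have hx1 : t ≤ dist x a := hxK.2
      have hx2 : dist x a ≤ R := hxK.1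
      rw [← dist_eq_norm_sub]
      rcases hx1.eq_or_lt with h | h
      · have h1 := (hball (show x ∈ closedBall a t₀ from mem_closedBall.2 (h ▸ htt))).1
        have h2 : Real.log R ≤ Real.log s := log_le_log (by linarith) hRs.le
        rw [← h]
        nlinarith
      · rcases hx2.eq_or_lt with h' | h'
        · rw [h']; simpa using hle x (hKs hxK)
        · refine absurd ?_ hx.2
          refine mem_interior.2 ⟨ball a R ∩ {y | t < dist y a},
            fun y hy => ⟨ball_subset_closedBall hy.1, show t ≤ dist y a from le_of_lt hy.2⟩,
            isOpen_ball.inter (isOpen_lt continuous_const (by fun_prop)), h', h⟩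
  refine ⟨ε / s, by positivity, t, hts, fun z hz1 hz2 => ?_⟩
  have hzpos : 0 < dist z a := ht.trans_le hz1
  have hlim : u z ≤ ε * (Real.log (dist z a) - Real.log s) := by
    have hT : Tendsto (fun R => ε * (Real.log (dist z a) - Real.log R)) (𝓝[<] s)
        (𝓝 (ε * (Real.log (dist z a) - Real.log s))) :=
      (((continuousAt_log hs.ne').tendsto.mono_left nhdsWithin_le_nhds).const_sub _).const_mul _
    refine ge_of_tendsto hT ?_
    filter_upwards [Ioo_mem_nhdsLT hz2] with R hR
    exact barrier R (hz1.trans_lt hR.1) hR.2 z hz1 hR.1.le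
  have h1 : Real.log (dist z a) - Real.log s ≤ dist z a / s - 1 := by
    rw [← log_div hzpos.ne' hs.ne']
    exact log_le_sub_one_of_pos (by positivity)
  calc u z ≤ ε * (dist z a / s - 1) := hlim.trans (by gcongr)
    _ = -(ε / s * (s - dist z a)) := by field_simp; ring

end Subharmonic

section PowerBounded

variable {V : Type*} [NormedAddCommGroup V] [NormedSpace ℂ V]

theorem norm_le_one_of_hasEigenvalue_of_norm_pow_apply_le {A : V →L[ℂ] V} {C : ℝ}
    (hA : ∀ (k : ℕ) v, ‖(A ^ k) v‖ ≤ C * ‖v‖) {μ : ℂ}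
    (hμ : Module.End.HasEigenvalue (A : V →ₗ[ℂ] V) μ) : ‖μ‖ ≤ 1 := by
  obtain ⟨v, hv⟩ := hμ.exists_hasEigenvector
  have hAv : A v = μ • v := hv.apply_eq_smul
  have hv0 : 0 < ‖v‖ := norm_pos_iff.2 hv.2
  have hpow : ∀ k : ℕ, (A ^ k) v = μ ^ k • v := fun k => by
    induction k with
    | zero => simp
    | succ k ih =>
      rw [pow_succ, mul_apply_eq_comp, hAv, map_smul, ih, smul_smul, pow_succ, mul_comm]
  by_contra! h
  obtain ⟨k, hk⟩ := pow_unbounded_of_one_lt C h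
  have := hA k v
  rw [hpow, norm_smul, norm_pow] at this
  exact absurd (le_of_mul_le_mul_right this hv0) hk.not_ge

/-- A power-bounded unipotent operator is the identity. -/
theorem eq_one_of_isNilpotent_sub_one {A : V →L[ℂ] V} {C : ℝ}
    (hA : ∀ (k : ℕ) v, ‖(A ^ k) v‖ ≤ C * ‖v‖) (hN : IsNilpotent (A - 1)) : A = 1 := by
  set N := A - 1 with hNdef
  have hAN : A = 1 + N := by rw [hNdef]; abel
  suffices descend : ∀ m, N ^ (m + 2) = 0 → N ^ (m + 1) = 0 by
    have hzero : ∀ k, N ^ (k + 1) = 0 → N = 0 := fun k => by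
      induction k with
      | zero => simp
      | succ k ih => exact fun h => ih (descend k h)
    obtain ⟨k, hk⟩ := hN
    rw [hAN, hzero k (pow_eq_zero_of_le k.le_succ hk), add_zero]
  intro m hm2
  by_contra hm1
  obtain ⟨x, hx⟩ : ∃ x, (N ^ (m + 1)) x ≠ 0 := by
    by_contra! h
    exact hm1 (ContinuousLinearMap.ext h)
  set v := (N ^ m) x
  have hv1 : N v ≠ 0 := by
    rwa [pow_succ', mul_apply_eq_comp] at hx
  have hv2 : N (N v) = 0 := by
    have h : (N ^ (m + 2)) x = 0 := by rw [hm2]; rfl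
    rwa [pow_succ', pow_succ', mul_apply_eq_comp, mul_apply_eq_comp] at h
  have hpow : ∀ k : ℕ, (A ^ k) v = v + (k : ℂ) • N v := fun k => by
    induction k with
    | zero => simp
    | succ k ih =>
      rw [pow_succ', mul_apply_eq_comp, ih, hAN]
      have hadd : ∀ y, (1 + N) y = y + N y := fun y => rfl
      rw [hadd, map_add, map_smul, hv2, smul_zero, Nat.cast_succ, add_smul, one_smul]
      abel
  have hpos : 0 < ‖N v‖ := norm_pos_iff.2 hv1
  obtain ⟨k, hk⟩ := exists_nat_gt ((C * ‖v‖ + ‖v‖) / ‖N v‖)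
  rw [div_lt_iff₀ hpos] at hk
  have h1 := hA k v
  rw [hpow] at h1
  have h2 := norm_sub_le (v + (k : ℂ) • N v) v
  rw [add_sub_cancel_left, norm_smul, Complex.norm_natCast] at h2
  linarith

variable [FiniteDimensional ℂ V]

theorem re_trace_eq_sum_map_re_roots (T : Module.End ℂ V) :
    (LinearMap.trace ℂ V T).re = (T.charpoly.roots.map Complex.re).sum := by
  rw [Module.End.trace_eq_sum_roots_charpoly_of_splits (IsAlgClosed.splits _)]
  exact map_multiset_sum Complex.reAddGroupHom _

theorem card_roots_charpoly_eq_finrank (T : Module.End ℂ V) :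
    T.charpoly.roots.card = Module.finrank ℂ V := by
  rw [← (IsAlgClosed.splits T.charpoly).natDegree_eq_card_roots, LinearMap.charpoly_natDegree]

theorem norm_le_one_of_mem_roots_charpoly {A : V →L[ℂ] V} {C : ℝ}
    (hA : ∀ (k : ℕ) v, ‖(A ^ k) v‖ ≤ C * ‖v‖) {μ : ℂ}
    (hμ : μ ∈ (LinearMap.charpoly (A : V →ₗ[ℂ] V)).roots) : ‖μ‖ ≤ 1 :=
  norm_le_one_of_hasEigenvalue_of_norm_pow_apply_le hA
    ((Module.End.hasEigenvalue_iff_isRoot_charpoly _ μ).2 (Polynomial.isRoot_of_mem_roots hμ))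

theorem re_trace_le_finrank {A : V →L[ℂ] V} {C : ℝ}
    (hA : ∀ (k : ℕ) v, ‖(A ^ k) v‖ ≤ C * ‖v‖) :
    (LinearMap.trace ℂ V A).re ≤ Module.finrank ℂ V := by
  rw [re_trace_eq_sum_map_re_roots, ← card_roots_charpoly_eq_finrank (A : V →ₗ[ℂ] V)]
  have := Multiset.sum_le_card_nsmul
    ((LinearMap.charpoly (A : V →ₗ[ℂ] V)).roots.map Complex.re) 1 ?_
  · simpa using this
  · intro x hx
    obtain ⟨μ, hμ, rfl⟩ := Multiset.mem_map.1 hx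
    exact (Complex.re_le_norm μ).trans (norm_le_one_of_mem_roots_charpoly hA hμ)

/-- A power-bounded operator whose trace has real part at least the dimension is the identity. -/
theorem eq_one_of_finrank_le_re_trace {A : V →L[ℂ] V} {C : ℝ}
    (hA : ∀ (k : ℕ) v, ‖(A ^ k) v‖ ≤ C * ‖v‖)
    (htr : Module.finrank ℂ V ≤ (LinearMap.trace ℂ V A).re) : A = 1 := by
  set T : Module.End ℂ V := (A : V →ₗ[ℂ] V)
  have hnorm : ∀ μ ∈ T.charpoly.roots, ‖μ‖ ≤ 1 := fun μ hμ =>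
    norm_le_one_of_mem_roots_charpoly hA hμ
  have hone : ∀ μ ∈ T.charpoly.roots, μ = 1 := by
    intro μ hμ
    have hre : 1 ≤ μ.re := by
      by_contra! hlt
      have h := Multiset.sum_lt_sum (s := T.charpoly.roots) (f := Complex.re)
        (g := fun _ => (1 : ℝ))
        (fun ν hν => (Complex.re_le_norm ν).trans (hnorm ν hν)) ⟨μ, hμ, hlt⟩
      rw [re_trace_eq_sum_map_re_roots, ← card_roots_charpoly_eq_finrank T] at htr
      simp only [Multiset.map_const', Multiset.sum_replicate, nsmul_eq_mul, mul_one] at h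
      linarith
    have hsq : μ.re * μ.re + μ.im * μ.im ≤ 1 := by
      rw [← Complex.normSq_apply, Complex.normSq_eq_norm_sq]
      exact pow_le_one₀ (norm_nonneg _) (hnorm μ hμ)
    have him : μ.im = 0 := by nlinarith
    have hre' : μ.re = 1 := by nlinarith
    exact Complex.ext hre' him
  refine eq_one_of_isNilpotent_sub_one hA ⟨T.charpoly.roots.card, ?_⟩
  have hpoly : T.charpoly = (Polynomial.X - Polynomial.C 1) ^ T.charpoly.roots.card := by
    conv_lhs => rw [
      (IsAlgClosed.splits T.charpoly).eq_prod_roots_of_monic (LinearMap.charpoly_monic T),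
      Multiset.eq_replicate_card.2 hone]
    simp
  have h0 := LinearMap.aeval_self_charpoly T
  rw [hpoly] at h0
  simp only [map_one, map_pow, map_sub, Polynomial.aeval_X] at h0
  refine ContinuousLinearMap.coe_injective ?_
  have : (((A - 1) ^ T.charpoly.roots.card : V →L[ℂ] V) : V →ₗ[ℂ] V) =
      (T - 1) ^ T.charpoly.roots.card :=
    map_pow (ContinuousLinearMap.toLinearMapRingHom (R₁ := ℂ) (M₁ := V)) (A - 1) _
  rw [this, h0]
  rfl

end PowerBounded

section Cartan

variable {E : Type*} [NormedAddCommGroup E] [NormedSpace ℂ E]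

theorem DifferentiableOn.iterate_of_mapsTo {F : E → E} {Ω : Set E} (hF : DifferentiableOn ℂ F Ω)
    (hmaps : MapsTo F Ω Ω) (k : ℕ) : DifferentiableOn ℂ F^[k] Ω := by
  induction k with
  | zero => exact differentiableOn_id
  | succ k ih => rw [iterate_succ]; exact ih.comp hF hmaps

/-- The iterates of the derivative of a self-map of a bounded open set at a fixed point are
uniformly bounded. -/
theorem exists_norm_fderiv_pow_apply_le {F : E → E} {Ω : Set E} (hΩ : IsOpen Ω) {M : ℝ}
    (hM : ∀ x ∈ Ω, ‖x‖ ≤ M) (hF : DifferentiableOn ℂ F Ω) (hmaps : MapsTo F Ω Ω) {z₀ : E}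
    (hz₀ : z₀ ∈ Ω) (hfix : F z₀ = z₀) :
    ∃ C : ℝ, ∀ (k : ℕ) (v : E), ‖(fderiv ℂ F z₀ ^ k) v‖ ≤ C * ‖v‖ := by
  obtain ⟨r, hr, hball⟩ := Metric.isOpen_iff.1 hΩ z₀ hz₀
  have hder : HasFDerivAt F (fderiv ℂ F z₀) z₀ :=
    (hF.differentiableAt (hΩ.mem_nhds hz₀)).hasFDerivAt
  refine ⟨2 * M / r, fun k v => ContinuousLinearMap.le_of_opNorm_le _ ?_ v⟩
  rw [← (hder.iterate hfix k).fderiv]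
  refine norm_fderiv_le_div_of_mapsTo_ball ((hF.iterate_of_mapsTo hmaps k).mono hball)
    (fun x hx => ?_) hr
  rw [mem_closedBall, dist_eq_norm_sub]
  have h1 := hM _ (hmaps.iterate k (hball hx))
  have h2 := hM _ (hmaps.iterate k hz₀)
  linarith [norm_sub_le (F^[k] x) (F^[k] z₀)]

/-- A bounded holomorphic map vanishing to second order at a point has strict derivative zero
there. -/
theorem hasStrictFDerivAt_zero_of_isLittleO {h : E → E} {z₀ : E} {r M : ℝ} (hr : 0 < r)
    (hd : DifferentiableOn ℂ h (ball z₀ r)) (hM : ∀ x ∈ ball z₀ r, ‖h x‖ ≤ M) (h0 : h z₀ = 0)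
    (ho : h =o[𝓝 z₀] fun w => ‖w - z₀‖ ^ 1) : HasStrictFDerivAt h (0 : E →L[ℂ] E) z₀ := by
  have hM0 : 0 ≤ M := (norm_nonneg _).trans (hM z₀ (mem_ball_self hr))
  have hquad : ∀ x ∈ ball z₀ r, ‖h x‖ ≤ M * (dist x z₀ / r) ^ 2 := fun x hx => by
    simpa [h0] using dist_le_mul_div_pow_of_mapsTo_ball_of_isLittleO (n := 1) hd
      (fun y hy => by simpa [h0] using hM y hy) (by simpa [h0] using ho) hx
  have hfd : ∀ᶠ x in 𝓝 z₀, HasFDerivAt h (fderiv ℂ h x) x := by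
    filter_upwards [isOpen_ball.mem_nhds (mem_ball_self hr)] with x hx
    exact (hd.differentiableAt (isOpen_ball.mem_nhds hx)).hasFDerivAt
  have hzero : fderiv ℂ h z₀ = 0 := by
    refine HasFDerivAt.fderiv (.of_isLittleO ?_)
    simpa [h0] using ho.norm_right
  rw [← hzero]
  refine hasStrictFDerivAt_of_hasFDerivAt_of_continuousAt hfd ?_
  rw [Metric.continuousAt_iff]
  intro ε hε
  obtain ⟨τ, hτ, hτr, hτε⟩ : ∃ τ > 0, 2 * τ ≤ r ∧ 8 * M / r ^ 2 * τ < ε := by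
    have h1 : Tendsto (fun τ : ℝ => 8 * M / r ^ 2 * τ) (𝓝[>] 0) (𝓝 0) := by
      have : Continuous fun τ : ℝ => 8 * M / r ^ 2 * τ := by fun_prop
      simpa using (this.tendsto 0).mono_left nhdsWithin_le_nhds
    obtain ⟨τ, h2, h3⟩ := ((h1.eventually (gt_mem_nhds hε)).and
      (Ioo_mem_nhdsGT (half_pos hr))).exists
    exact ⟨τ, h3.1, by linarith [h3.2], h2⟩
  refine ⟨τ, hτ, fun {x} hx => ?_⟩
  rw [hzero, dist_zero_right]
  have hsub : ball x τ ⊆ ball z₀ (2 * τ) := ball_subset_ball' (by linarith)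
  have hb : ∀ y ∈ ball z₀ (2 * τ), ‖h y‖ ≤ 4 * M / r ^ 2 * τ ^ 2 := fun y hy => by
    refine (hquad y (ball_subset_ball hτr hy)).trans ?_
    calc M * (dist y z₀ / r) ^ 2 ≤ M * (2 * τ / r) ^ 2 := by
          have := (mem_ball.1 hy).le
          gcongr
      _ = 4 * M / r ^ 2 * τ ^ 2 := by ring
  have hxmem : x ∈ ball z₀ (2 * τ) := mem_ball.2 (by linarith)
  refine (norm_fderiv_le_div_of_mapsTo_ball (R₂ := 8 * M / r ^ 2 * τ ^ 2)
    (hd.mono (hsub.trans (ball_subset_ball hτr))) (fun y hy => ?_) hτ).trans_lt ?_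
  · rw [mem_closedBall, dist_eq_norm_sub]
    linear_combination norm_sub_le (h y) (h x) + hb y (hsub hy) + hb x hxmem
  · rwa [pow_two τ, ← mul_assoc, mul_div_cancel_right₀ _ hτ.ne']

/-- Cartan's uniqueness theorem on balls around the fixed point. -/
theorem eqOn_ball_of_fderiv_eq_id {F : E → E} {Ω : Set E} {M : ℝ}
    (hM : ∀ x ∈ Ω, ‖x‖ ≤ M) (hF : DifferentiableOn ℂ F Ω) (hmaps : MapsTo F Ω Ω) {z₀ : E} {r : ℝ}
    (hball : ball z₀ r ⊆ Ω) (hfix : F z₀ = z₀)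
    (hder : HasFDerivAt F (ContinuousLinearMap.id ℂ E) z₀) : EqOn F id (ball z₀ r) := by
  rcases le_or_gt r 0 with hr | hr
  · simp [ball_eq_empty.2 hr]
  have hz₀ : z₀ ∈ Ω := hball (mem_ball_self hr)
  have hdiff : ∀ k : ℕ, DifferentiableOn ℂ (fun x => F^[k] x - x) (ball z₀ r) := fun k =>
    ((hF.iterate_of_mapsTo hmaps k).mono hball).sub differentiableOn_id
  have hbound : ∀ k : ℕ, ∀ x ∈ ball z₀ r, ‖F^[k] x - x‖ ≤ 2 * M := fun k x hx => by
    linarith [norm_sub_le (F^[k] x) x, hM _ (hmaps.iterate k (hball hx)), hM _ (hball hx)]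
  have hfixk : ∀ k : ℕ, F^[k] z₀ - z₀ = 0 := fun k => by rw [iterate_fixed hfix, sub_self]
  have schwarz : ∀ k m : ℕ, (fun x => F^[k] x - x) =o[𝓝 z₀] (fun w => ‖w - z₀‖ ^ m) →
      ∀ x ∈ ball z₀ r, ‖F^[k] x - x‖ ≤ 2 * M * (dist x z₀ / r) ^ (m + 1) := fun k m ho x hx => by
    simpa [hfixk] using dist_le_mul_div_pow_of_mapsTo_ball_of_isLittleO (n := m) (hdiff k)
      (fun y hy => by simpa [hfixk] using hbound k y hy) (by simpa [hfixk] using ho) hx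
  have hM0 : 0 ≤ M := (norm_nonneg _).trans (hM z₀ hz₀)
  have hlin : (fun x => F x - x) =o[𝓝 z₀] fun w => ‖w - z₀‖ ^ 1 := by
    have := hder.isLittleO.norm_right
    simp only [pow_one]
    refine this.congr_left fun x => ?_
    rw [hfix, ContinuousLinearMap.id_apply]; abel
  have hstrict : HasStrictFDerivAt (fun x => F x - x) (0 : E →L[ℂ] E) z₀ :=
    hasStrictFDerivAt_zero_of_isLittleO hr (hdiff 1) (hbound 1) (hfixk 1) hlin
  have hcont : ∀ k : ℕ, Tendsto F^[k] (𝓝 z₀) (𝓝 z₀) := fun k => by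
    have := (hder.continuousAt.iterate hfix k).tendsto
    rwa [iterate_fixed hfix] at this
  have hflat : ∀ m : ℕ, (fun x => F x - x) =o[𝓝 z₀] fun w => ‖w - z₀‖ ^ (m + 1) := by
    intro m
    induction m with
    | zero => exact hlin
    | succ m ih =>
      have hO : (fun x => F x - x) =O[𝓝 z₀] fun w => ‖w - z₀‖ ^ (m + 2) := by
        refine Asymptotics.IsBigO.of_bound (2 * M / r ^ (m + 2)) ?_
        filter_upwards [ball_mem_nhds z₀ hr] with x hx
        refine (schwarz 1 (m + 1) ih x hx).trans_eq ?_
        rw [dist_eq_norm_sub, norm_pow, norm_norm, div_pow]; ring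
      have hiter : ∀ k : ℕ, (fun x => F^[k] x - x - (k : ℂ) • (F x - x)) =o[𝓝 z₀]
          fun w => ‖w - z₀‖ ^ (m + 2) := by
        intro k
        induction k with
        | zero => simp
        | succ k ihk =>
          have hOk : (fun x => F^[k] x - x) =O[𝓝 z₀] fun w => ‖w - z₀‖ ^ (m + 2) :=
            (ihk.isBigO.add (hO.const_smul_left (k : ℂ))).congr_left fun x => by
              simp only [Pi.smul_apply]; abel
          have hdiffk : (fun x => F (F^[k] x) - F^[k] x - (F x - x)) =o[𝓝 z₀]
              fun w => ‖w - z₀‖ ^ (m + 2) := by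
            have h1 := hstrict.isLittleO.comp_tendsto
              ((hcont k).prodMk_nhds (tendsto_id (x := 𝓝 z₀)))
            refine Asymptotics.IsLittleO.trans_isBigO (h1.congr_left fun x => ?_) hOk
            simp
          refine (ihk.add hdiffk).congr_left fun x => ?_
          rw [iterate_succ_apply', Nat.cast_succ, add_smul, one_smul]
          abel
      refine Asymptotics.isLittleO_iff.2 fun ε hε => ?_
      obtain ⟨k, hk⟩ := exists_nat_gt ((2 * M / r ^ (m + 2) + ε) / ε)
      have hk0 : (0 : ℝ) < k := lt_of_le_of_lt (by positivity) hk
      rw [div_lt_iff₀ hε] at hk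
      have hok : (fun x => F^[k] x - x) =o[𝓝 z₀] fun w => ‖w - z₀‖ ^ (m + 1) := by
        have hpow : (fun w => ‖w - z₀‖ ^ (m + 2)) =O[𝓝 z₀] fun w => ‖w - z₀‖ ^ (m + 1) := by
          refine Asymptotics.IsBigO.of_bound 1 ?_
          filter_upwards [ball_mem_nhds z₀ one_pos] with x hx
          rw [norm_pow, norm_pow, norm_norm, one_mul]
          exact pow_le_pow_of_le_one (norm_nonneg _)
            (by simpa [dist_eq_norm_sub] using (mem_ball.1 hx).le) (by omega)
        exact (((hiter k).trans_isBigO hpow).add (ih.const_smul_left (k : ℂ))).congr_left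
          fun x => by simp only [Pi.smul_apply]; abel
      filter_upwards [ball_mem_nhds z₀ hr, Asymptotics.isLittleO_iff.1 (hiter k) hε] with x hx hx'
      have h1 := schwarz k (m + 1) hok x hx
      have h2 := norm_sub_le (F^[k] x - x) (F^[k] x - x - (k : ℂ) • (F x - x))
      rw [sub_sub_cancel, norm_smul, Complex.norm_natCast] at h2
      have h3 : 2 * M * (dist x z₀ / r) ^ (m + 2) =
          2 * M / r ^ (m + 2) * ‖‖x - z₀‖ ^ (m + 2)‖ := by
        rw [dist_eq_norm_sub, norm_pow, norm_norm, div_pow]; ring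
      have h4 : k * ‖F x - x‖ ≤ k * (ε * ‖‖x - z₀‖ ^ (m + 2)‖) := by
        calc k * ‖F x - x‖ ≤ (2 * M / r ^ (m + 2) + ε) * ‖‖x - z₀‖ ^ (m + 2)‖ := by
              rw [add_mul, ← h3]; linarith
          _ ≤ (k * ε) * ‖‖x - z₀‖ ^ (m + 2)‖ := by gcongr
          _ = k * (ε * ‖‖x - z₀‖ ^ (m + 2)‖) := by ring
      exact le_of_mul_le_mul_left h4 hk0
  intro x hx
  have hT : Tendsto (fun m : ℕ => 2 * M * (dist x z₀ / r) ^ (m + 2)) atTop (𝓝 (2 * M * 0)) :=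
    (((tendsto_pow_atTop_nhds_zero_of_lt_one (by positivity)
      ((div_lt_one hr).2 (mem_ball.1 hx))).comp (tendsto_add_atTop_nat 2))).const_mul _
  rw [mul_zero] at hT
  have := ge_of_tendsto' hT fun m => schwarz 1 (m + 1) (hflat m) x hx
  simpa [sub_eq_zero] using this

/-- Cartan's uniqueness theorem. -/
theorem eqOn_id_of_fderiv_eq_id {F : E → E} {Ω : Set E} (hΩ : IsOpen Ω) (hconn : IsPreconnected Ω)
    {M : ℝ} (hM : ∀ x ∈ Ω, ‖x‖ ≤ M) (hF : DifferentiableOn ℂ F Ω) (hmaps : MapsTo F Ω Ω) {z₀ : E}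
    (hz₀ : z₀ ∈ Ω) (hfix : F z₀ = z₀) (hder : HasFDerivAt F (ContinuousLinearMap.id ℂ E) z₀) :
    EqOn F id Ω := by
  have hsub : Ω ⊆ {z | F =ᶠ[𝓝 z] id} := by
    refine hconn.subset_of_closure_inter_subset isOpen_setOfPred_eventually_nhds ?_ ?_
    · obtain ⟨r, hr, hball⟩ := Metric.isOpen_iff.1 hΩ z₀ hz₀
      exact ⟨z₀, hz₀, (eqOn_ball_of_fderiv_eq_id hM hF hmaps hball hfix hder).eventuallyEq_of_mem
        (ball_mem_nhds z₀ hr)⟩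
    · rintro z ⟨hz, hzΩ⟩
      obtain ⟨r, hr, hball⟩ := Metric.isOpen_iff.1 hΩ z hzΩ
      obtain ⟨y, hy, hyz⟩ := Metric.mem_closure_iff.1 hz (r / 2) (half_pos hr)
      have hyball : ball y (r / 2) ⊆ Ω :=
        (ball_subset_ball' (by rw [dist_comm] at hyz; linarith)).trans hball
      have hy : F =ᶠ[𝓝 y] id := hy
      exact (eqOn_ball_of_fderiv_eq_id hM hF hmaps hyball hy.eq_of_nhds
        ((hasFDerivAt_id y).congr_of_eventuallyEq hy)).eventuallyEq_of_mem
        (isOpen_ball.mem_nhds hyz)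
  exact fun z hz => (hsub hz).eq_of_nhds

end Cartan

section BoundaryApproach

/-- The part of the hypotheses that forces a disk to approach the boundary point transversally:
the distance to the complement is at least comparable to `1 - r`. -/
theorem eventually_ball_subset_of_subharmonic {n : ℕ} {Ω U : Set (En n)} {φ : ℂ → En n}
    {p : En n} {ρ : En n → ℝ} (hφ : ContinuousOn φ (ball (0 : ℂ) 1))
    (hφmaps : MapsTo φ (ball (0 : ℂ) 1) Ω)
    (hφcont : Tendsto φ (𝓝[ball (0 : ℂ) 1] 1) (𝓝 p))
    (hU : U ∈ 𝓝 p) (hρ : ContDiffOn ℝ 1 ρ U) (hρneg : Ω ∩ U = {z ∈ U | ρ z < 0})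
    (hsub : ∀ a : ℂ, ∀ r : ℝ, 0 < r → closedBall a r ⊆ ball (0 : ℂ) 1 ∩ φ ⁻¹' U →
      ρ (φ a) ≤ Real.circleAverage (ρ ∘ φ) a r) :
    ∃ κ > 0, ∀ᶠ r : ℝ in 𝓝[<] 1, ball (φ r) (κ * (1 - r)) ⊆ Ω := by
  obtain ⟨L, W, hW, hLip⟩ := (hρ.contDiffAt hU).exists_lipschitzOnWith
  obtain ⟨ε, hε, hεsub⟩ := Metric.mem_nhds_iff.1 (inter_mem hU hW)
  have hnear : φ ⁻¹' ball p (ε / 2) ∈ 𝓝[ball (0 : ℂ) 1] 1 :=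
    hφcont (ball_mem_nhds p (half_pos hε))
  obtain ⟨τ, hτ, hτsub⟩ := Metric.mem_nhdsWithin_iff.1 hnear
  obtain ⟨s, hs, hs1, hsτ⟩ : ∃ s : ℝ, 0 < s ∧ s ≤ 1 ∧ 2 * s ≤ τ :=
    ⟨min 1 (τ / 2), by positivity, min_le_left _ _, by linarith [min_le_right 1 (τ / 2)]⟩
  have hnorm : ‖((1 - s : ℝ) : ℂ)‖ = 1 - s := by
    rw [Complex.norm_real, Real.norm_of_nonneg (by linarith)]
  have hdist1 : dist ((1 - s : ℝ) : ℂ) 1 = s := by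
    rw [← Complex.ofReal_one, Complex.dist_of_im_eq (by simp)]
    simp [abs_of_pos hs]
  have hD1 : ball ((1 - s : ℝ) : ℂ) s ⊆ ball 0 1 :=
    ball_subset_ball' (by rw [dist_zero_right, hnorm]; linarith)
  have hDτ : ball ((1 - s : ℝ) : ℂ) s ⊆ ball 1 τ :=
    ball_subset_ball' (by rw [hdist1]; linarith)
  have hDφ : ∀ ζ ∈ ball ((1 - s : ℝ) : ℂ) s, φ ζ ∈ ball p (ε / 2) := fun ζ hζ =>
    hτsub ⟨hDτ hζ, hD1 hζ⟩
  have hDU : ∀ ζ ∈ ball ((1 - s : ℝ) : ℂ) s, φ ζ ∈ U := fun ζ hζ =>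
    (hεsub (ball_subset_ball (by linarith) (hDφ ζ hζ))).1
  have hneg : ∀ ζ ∈ ball ((1 - s : ℝ) : ℂ) s, ρ (φ ζ) < 0 := fun ζ hζ =>
    (hρneg.subset ⟨hφmaps (hD1 hζ), hDU ζ hζ⟩).2
  obtain ⟨c, hc, t, hts, hopf⟩ := exists_le_neg_mul_of_le_circleAverage (u := ρ ∘ φ) hs
    (hρ.continuousOn.comp (hφ.mono hD1) hDU)
    (fun b r hr hbr => hsub b r hr fun ζ hζ => ⟨hD1 (hbr hζ), hDU ζ (hbr hζ)⟩)
    (fun ζ hζ => (hneg ζ hζ).le) (hneg _ (mem_ball_self hs))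
  set κ : ℝ := c / (L + 1) with hκ
  have hκpos : 0 < κ := by positivity
  have hκmul : κ * (L + 1) = c := div_mul_cancel₀ _ (by positivity)
  refine ⟨κ, hκpos, ?_⟩
  have hκlim : ∀ᶠ r : ℝ in 𝓝[<] 1, κ * (1 - r) < ε / 2 := by
    have h : Continuous fun r : ℝ => κ * (1 - r) := by fun_prop
    have h' : Tendsto (fun r : ℝ => κ * (1 - r)) (𝓝[<] 1) (𝓝 0) := by
      simpa using (h.tendsto 1).mono_left nhdsWithin_le_nhds
    exact h'.eventually (gt_mem_nhds (half_pos hε))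
  filter_upwards [hκlim, Ioo_mem_nhdsLT (show max (1 - s) (1 - s + t) < 1 from
    max_lt (by linarith) (by linarith))] with r hrκ hr z hz
  have hr1 : r < 1 := hr.2
  have hrs : 1 - s < r := (le_max_left _ _).trans_lt hr.1
  have hrt : 1 - s + t < r := (le_max_right _ _).trans_lt hr.1
  have hdist : dist (r : ℂ) ((1 - s : ℝ) : ℂ) = r - (1 - s) := by
    rw [Complex.dist_of_im_eq (by simp)]
    simp only [Complex.ofReal_re, Real.dist_eq]
    exact abs_of_pos (by linarith)
  have hrD : (r : ℂ) ∈ ball ((1 - s : ℝ) : ℂ) s := by rw [mem_ball, hdist]; linarith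
  have hρr : ρ (φ r) ≤ -(c * (1 - r)) := by
    have := hopf r (by rw [hdist]; linarith) (by rw [hdist]; linarith)
    rwa [hdist, show s - (r - (1 - s)) = 1 - r by ring] at this
  have hzp : z ∈ ball p ε := by
    have h1 : dist z (φ r) < κ * (1 - r) := hz
    have h2 : dist (φ r) p < ε / 2 := hDφ r hrD
    rw [mem_ball]
    linarith [dist_triangle z (φ r) p]
  have hlip := hLip.dist_le_mul z (hεsub hzp).2 (φ r)
    (hεsub (ball_subset_ball (by linarith) (hDφ r hrD))).2
  have hρz : ρ z < 0 := by
    have h1 : ρ z - ρ (φ r) ≤ L * dist z (φ r) := (le_abs_self _).trans hlip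
    have h2 : L * dist z (φ r) ≤ L * (κ * (1 - r)) := by
      gcongr
      exact (mem_ball.1 hz).le
    nlinarith [mul_pos hκpos (sub_pos.2 hr1)]
  exact (hρneg.superset ⟨(hεsub hzp).1, hρz⟩).1

theorem dist_le_of_lipschitzOnWith {X : Type*} [PseudoMetricSpace X] {φ : ℂ → X} {p : X} {δ : ℝ}
    {c : NNReal} (hlip : LipschitzOnWith c φ (ball (0 : ℂ) 1 ∩ ball (1 : ℂ) δ)) (hδ : 0 < δ)
    (hφcont : Tendsto φ (𝓝[ball (0 : ℂ) 1] 1) (𝓝 p)) {ζ : ℂ}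
    (hζ : ζ ∈ ball (0 : ℂ) 1 ∩ ball (1 : ℂ) δ) : dist (φ ζ) p ≤ c * dist ζ 1 := by
  have hne : (𝓝[ball (0 : ℂ) 1] 1).NeBot := by
    rw [← mem_closure_iff_nhdsWithin_neBot, closure_ball 0 one_ne_zero]
    simp
  have h1 : Tendsto (fun ξ => dist (φ ζ) (φ ξ)) (𝓝[ball (0 : ℂ) 1] 1) (𝓝 (dist (φ ζ) p)) :=
    tendsto_const_nhds.dist hφcont
  have h2 : Tendsto (fun ξ => c * dist ζ ξ) (𝓝[ball (0 : ℂ) 1] 1) (𝓝 (c * dist ζ 1)) := by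
    have h : Continuous fun ξ : ℂ => (c : ℝ) * dist ζ ξ := by fun_prop
    exact (h.tendsto 1).mono_left nhdsWithin_le_nhds
  refine le_of_tendsto_of_tendsto h1 h2 ?_
  filter_upwards [self_mem_nhdsWithin, mem_nhdsWithin_of_mem_nhds (ball_mem_nhds 1 hδ)]
    with ξ hξ hξδ
  exact hlip.dist_le_mul ζ hζ ξ ⟨hξ, hξδ⟩

/-- If `F z = z + o(‖z - p‖ ^ 2)` and `φ` consists of fixed points approaching `p` transversally,
then the derivative of `F` along `φ` is `1 + o(1 - r)`. -/
theorem eventually_norm_fderiv_sub_one_le {n : ℕ} {Ω : Set (En n)} {F : En n → En n} {p : En n}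
    {γ : ℝ → En n} {κ C η : ℝ} (hF : DifferentiableOn ℂ F Ω) (hp : p ∉ Ω)
    (ho : LittleOh Ω F p 2) (hκ : 0 < κ) (hη : 0 < η)
    (hγ : ∀ᶠ r : ℝ in 𝓝[<] 1, ball (γ r) (κ * (1 - r)) ⊆ Ω)
    (hγp : ∀ᶠ r : ℝ in 𝓝[<] 1, dist (γ r) p ≤ C * (1 - r))
    (hfix : ∀ᶠ r : ℝ in 𝓝[<] 1, F (γ r) = γ r) :
    ∀ᶠ r : ℝ in 𝓝[<] 1, ‖fderiv ℂ F (γ r) - 1‖ ≤ η * ((C + κ) ^ 2 / κ) * (1 - r) := by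
  obtain ⟨ε, hε, hεF⟩ := Metric.mem_nhdsWithin_iff.1 (ho.eventually (gt_mem_nhds hη))
  have hlim : ∀ᶠ r : ℝ in 𝓝[<] 1, (C + κ) * (1 - r) < ε := by
    have h : Continuous fun r : ℝ => (C + κ) * (1 - r) := by fun_prop
    have h' : Tendsto (fun r : ℝ => (C + κ) * (1 - r)) (𝓝[<] 1) (𝓝 0) := by
      simpa using (h.tendsto 1).mono_left nhdsWithin_le_nhds
    exact h'.eventually (gt_mem_nhds hε)
  filter_upwards [hγ, hγp, hfix, hlim, self_mem_nhdsWithin] with r hball hdist hfixr hrε hr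
  have hr : 0 < 1 - r := sub_pos.2 hr
  have hR : 0 < κ * (1 - r) := mul_pos hκ hr
  have hFr : DifferentiableAt ℂ F (γ r) :=
    (hF.mono hball).differentiableAt (ball_mem_nhds _ hR)
  have hfd : fderiv ℂ (fun z => F z - z) (γ r) = fderiv ℂ F (γ r) - 1 := by
    rw [fderiv_fun_sub hFr differentiableAt_fun_id, fderiv_fun_id]; rfl
  rw [← hfd]
  refine (norm_fderiv_le_div_of_mapsTo_ball (f := fun z => F z - z) (R₂ := η * ((C + κ) * (1 - r)) ^ 2)
    ((hF.mono hball).sub differentiableOn_id) (fun z hz => ?_) hR).trans_eq ?_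
  · have hzp : dist z p ≤ (C + κ) * (1 - r) := by
      have : dist z (γ r) < κ * (1 - r) := hz
      linarith [dist_triangle z (γ r) p]
    have hz' : ‖F z - z‖ / ‖z - p‖ ^ 2 < η := hεF ⟨mem_ball.2 (hzp.trans_lt hrε), hball hz⟩
    simp only [mem_closedBall, hfixr, sub_self, dist_zero_right]
    have hne : z ≠ p := fun h => hp (h ▸ hball hz)
    have hpos : 0 < ‖z - p‖ := norm_pos_iff.2 (sub_ne_zero.2 hne)
    rw [div_lt_iff₀ (by positivity)] at hz'
    rw [dist_eq_norm_sub] at hzp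
    exact hz'.le.trans (by gcongr)
  · field_simp

end BoundaryApproach

theorem huang_rigidity_along_analytic_disc
    {n : ℕ} (hn : 2 ≤ n) (Ω : Set (En n))
    (hΩ : IsDomain' Ω) (hbd : Bornology.IsBounded Ω)
    (φ : ℂ → En n) (p : En n) (hp : p ∈ frontier Ω)
    (hφhol : DifferentiableOn ℂ φ (Metric.ball (0 : ℂ) 1))
    (hφmaps : MapsTo φ (Metric.ball (0 : ℂ) 1) Ω)
    (hφproper : ∀ K ⊆ Ω, IsCompact K →
      IsCompact {ζ ∈ Metric.ball (0 : ℂ) 1 | φ ζ ∈ K})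
    (δ : ℝ) (hδ : 0 < δ) (c : NNReal)
    (hφlip : LipschitzOnWith c φ (Metric.ball (0 : ℂ) 1 ∩ Metric.ball (1 : ℂ) δ))
    (hφ1 : φ 1 = p)
    (hφcont : Tendsto φ (𝓝[Metric.ball (0 : ℂ) 1] 1) (𝓝 p))
    (U : Set (En n)) (hU : U ∈ 𝓝 p) (hUopen : IsOpen U)
    (ρ : En n → ℝ) (hρC1 : ContDiffOn ℝ 1 ρ U)
    (hρd : ∀ z ∈ U, fderiv ℝ ρ z ≠ 0)
    (hρneg : Ω ∩ U = {z ∈ U | ρ z < 0})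
    (hρzero : frontier Ω ∩ U = {z ∈ U | ρ z = 0})
    (hsub : ∀ a : ℂ, ∀ r : ℝ, 0 < r →
      Metric.closedBall a r ⊆ Metric.ball (0 : ℂ) 1 ∩ φ ⁻¹' U →
      ρ (φ a) ≤ (1 / (2 * Real.pi)) *
        ∫ θ in (0 : ℝ)..(2 * Real.pi), ρ (φ (a + r * Complex.exp (θ * I))))
    (F : En n → En n) (hF : DifferentiableOn ℂ F Ω) (hFself : MapsTo F Ω Ω)
    (hfix : ∀ ζ ∈ Metric.ball (0 : ℂ) 1, F (φ ζ) = φ ζ)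
    (ho : LittleOh Ω F p 2) :
    ∀ z ∈ Ω, F z = z := by
  obtain ⟨hΩo, hΩc⟩ := hΩ
  obtain ⟨M, hM⟩ := hbd.exists_norm_le
  have hpΩ : p ∉ Ω := fun h => hp.2 (hΩo.interior_eq.symm ▸ h)
  have h0 : (0 : ℂ) ∈ ball (0 : ℂ) 1 := mem_ball_self one_pos
  have hpow : ∀ ζ ∈ ball (0 : ℂ) 1, ∃ C : ℝ, ∀ (k : ℕ) (v : En n),
      ‖(fderiv ℂ F (φ ζ) ^ k) v‖ ≤ C * ‖v‖ := fun ζ hζ =>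
    exists_norm_fderiv_pow_apply_le hΩo hM hF hFself (hφmaps hζ) (hfix ζ hζ)
  obtain ⟨κ, hκ, hκball⟩ := eventually_ball_subset_of_subharmonic hφhol.continuousOn hφmaps hφcont
    hU hρC1 hρneg fun a r hr h => by
      simpa [Real.circleAverage, circleMap] using hsub a r hr h
  have hdist1 : ∀ r : ℝ, r < 1 → dist (r : ℂ) 1 = 1 - r := fun r hr => by
    rw [← Complex.ofReal_one, Complex.dist_of_im_eq (by simp), dist_comm]
    simpa [Real.dist_eq] using hr.le
  have hreal : ∀ᶠ r : ℝ in 𝓝[<] 1, (r : ℂ) ∈ ball (0 : ℂ) 1 ∩ ball (1 : ℂ) δ := by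
    filter_upwards [Ioo_mem_nhdsLT (show max 0 (1 - δ) < 1 from max_lt one_pos (by linarith))]
      with r hr
    have h1 : 0 < r := (le_max_left _ _).trans_lt hr.1
    have h2 : 1 - δ < r := (le_max_right _ _).trans_lt hr.1
    refine ⟨?_, ?_⟩
    · rw [mem_ball_zero_iff, Complex.norm_real, Real.norm_of_nonneg h1.le]; exact hr.2
    · rw [mem_ball, hdist1 r hr.2]; linarith
  have happroach : ∀ᶠ r : ℝ in 𝓝[<] 1, dist (φ r) p ≤ c * (1 - r) := by
    filter_upwards [hreal, self_mem_nhdsWithin] with r hr hr1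
    rw [← hdist1 r hr1]
    exact dist_le_of_lipschitzOnWith hφlip hδ hφcont hr
  have hfixr : ∀ᶠ r : ℝ in 𝓝[<] 1, F (φ r) = φ r := by
    filter_upwards [hreal] with r hr using hfix _ hr.1
  set b := EuclideanSpace.basisFun (Fin n) ℂ
  set g : ℂ → ℂ := fun ζ => ∑ i, inner ℂ (b i) ((fderiv ℂ F (φ ζ) - 1) (b i))
  have hgtr : ∀ ζ, g ζ = LinearMap.trace ℂ (En n) (fderiv ℂ F (φ ζ)) - n := fun ζ => by
    have h := LinearMap.trace_eq_sum_inner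
      ((fderiv ℂ F (φ ζ) - 1 : En n →L[ℂ] En n) : En n →ₗ[ℂ] En n) b
    have e : ((fderiv ℂ F (φ ζ) - 1 : En n →L[ℂ] En n) : En n →ₗ[ℂ] En n) =
      (fderiv ℂ F (φ ζ) : En n →ₗ[ℂ] En n) - 1 := rfl
    have h' : LinearMap.trace ℂ (En n) 1 = n := by rw [LinearMap.trace_one]; simp
    rw [e, map_sub, h'] at h
    exact h.symm
  have hgdiff : DifferentiableOn ℂ g (ball 0 1) := by
    have hterm : ∀ i, DifferentiableOn ℂ
        (fun ζ => (innerSL ℂ (b i)) (fderiv ℂ F (φ ζ) (b i) - b i)) (ball 0 1) := fun i =>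
      (innerSL ℂ (b i)).differentiable.comp_differentiableOn
        ((differentiableOn_fderiv_comp_apply hΩo hF (fun x hx => hM _ (hFself hx)) isOpen_ball
          hφhol hφmaps (b i)).sub_const _)
    exact DifferentiableOn.fun_sum fun i _ => hterm i
  have hgle : ∀ ζ ∈ ball (0 : ℂ) 1, (g ζ).re ≤ 0 := fun ζ hζ => by
    obtain ⟨C, hC⟩ := hpow ζ hζ
    have := re_trace_le_finrank hC
    rw [hgtr]
    simpa using this
  have hg0 : 0 ≤ (g 0).re := by
    by_contra! hneg
    obtain ⟨c', hc', t, ht1, hopf⟩ := exists_le_neg_mul_of_le_circleAverage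
      (u := fun ζ => (g ζ).re) (a := 0) one_pos
      (Complex.continuous_re.comp_continuousOn hgdiff.continuousOn)
      (fun a r hr har => by
        refine (InnerProductSpace.HarmonicOnNhd.circleAverage_eq
          (f := fun ζ => (g ζ).re) fun x hx => ?_).ge
        rw [abs_of_pos hr] at hx
        exact (hgdiff.analyticAt (isOpen_ball.mem_nhds (har hx))).harmonicAt_re) hgle hneg
    set K : ℝ := n * ((c + κ) ^ 2 / κ) with hK
    have hK0 : 0 ≤ K := by positivity
    have hη : 0 < c' / (K + 1) := by positivity
    obtain ⟨r, hder, hr, hrt⟩ := ((eventually_norm_fderiv_sub_one_le (γ := fun r : ℝ => φ r)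
      hF hpΩ ho hκ hη hκball happroach hfixr).and (hreal.and
        (Ioo_mem_nhdsLT (show max 0 t < 1 from max_lt one_pos ht1)))).exists
    have hr0 : 0 < r := (le_max_left _ _).trans_lt hrt.1
    have hdr : dist (r : ℂ) 0 = r := by
      rw [dist_zero_right, Complex.norm_real, Real.norm_of_nonneg hr0.le]
    have h1 : (g r).re ≤ -(c' * (1 - r)) := by
      have := hopf r (by rw [hdr]; exact (le_max_right _ _).trans hrt.1.le)
        (by rw [hdr]; exact hrt.2)
      rwa [hdr] at this
    have h2 : ‖g r‖ ≤ n * ‖fderiv ℂ F (φ r) - 1‖ := by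
      refine (norm_sum_le _ _).trans ?_
      refine (Finset.sum_le_card_nsmul _ _ ‖fderiv ℂ F (φ r) - 1‖ fun i _ => ?_).trans_eq (by simp)
      refine (norm_inner_le_norm _ _).trans ?_
      have := (fderiv ℂ F (φ r) - 1).le_opNorm (b i)
      rw [b.norm_eq_one, mul_one] at this
      rwa [b.norm_eq_one, one_mul]
    have h3 : (n : ℝ) * ‖fderiv ℂ F (φ r) - 1‖ ≤ c' / (K + 1) * K * (1 - r) := by
      calc (n : ℝ) * ‖fderiv ℂ F (φ r) - 1‖
          ≤ n * (c' / (K + 1) * ((c + κ) ^ 2 / κ) * (1 - r)) := by gcongr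
        _ = c' / (K + 1) * K * (1 - r) := by rw [hK]; ring
    have h4 : -(g r).re ≤ ‖g r‖ := (neg_le_abs _).trans (Complex.abs_re_le_norm _)
    have h5 : c' / (K + 1) * (K + 1) = c' := div_mul_cancel₀ _ (by positivity)
    nlinarith [mul_pos hη (sub_pos.2 hrt.2)]
  obtain ⟨C, hC⟩ := hpow 0 h0
  have hone : fderiv ℂ F (φ 0) = 1 := by
    refine eq_one_of_finrank_le_re_trace hC ?_
    rw [hgtr] at hg0
    simpa using hg0
  have hder : HasFDerivAt F (ContinuousLinearMap.id ℂ (En n)) (φ 0) := by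
    have := (hF.differentiableAt (hΩo.mem_nhds (hφmaps h0))).hasFDerivAt
    rwa [hone] at this
  exact eqOn_id_of_fderiv_eq_id hΩo hΩc.isPreconnected hM hF hFself (hφmaps h0) (hfix 0 h0) hder
end
end

section
/- Let Ω be a domain in ℂ^{n+1} (n ≥ 0) having p ∈ ∂Ω as a smooth boundary point (there is a C^∞ real-valued function ρ on a neighborhood W of p with dρ_p ≠ 0 and Ω ∩ W = {z ∈ W : ρ(z) < 0}), and let f : Ω → ℂ^m be holomorphic. For C > 0 set Γ_C = {z ∈ Ω : ‖z−p‖ ≤ C·dist(z, ℂ^{n+1}∖Ω)}. Suppose the non-tangential differential of f at p exists: there exist v ∈ ℂ^m and a ℂ-linear map L : ℂ^{n+1} → ℂ^m such that for every C > 0, ‖f(z) − v − L(z−p)‖/‖z−p‖ → 0 as z → p within Γ_C. Then for every C > 0 and every sequence (z_k) in Γ_C with z_k → p, the complex derivatives df_{z_k} converge to L in operator norm. -/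
open Complex Topology Filter Metric Set Function

noncomputable section

/-- If `z` lies in the cone of aperture `C` at `p`, then the ball around `z` of half the distance
from `z` to the complement of `Ω` lies in the cone of aperture `2 * C + 1`. -/
theorem ball_half_infDist_subset_cone {E : Type*} [SeminormedAddCommGroup E] {Ω : Set E}
    {p z : E} {C : ℝ} (hC : 0 < C) (hz : ‖z - p‖ ≤ C * infDist z Ωᶜ) :
    ball z (infDist z Ωᶜ / 2) ⊆ {w ∈ Ω | ‖w - p‖ ≤ (2 * C + 1) * infDist w Ωᶜ} := by
  intro w hw
  have hwz : dist z w < infDist z Ωᶜ / 2 := by rw [dist_comm]; exact hw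
  have hle : infDist z Ωᶜ ≤ infDist w Ωᶜ + dist z w := infDist_le_infDist_add_dist
  have hd : 0 ≤ dist z w := dist_nonneg
  refine ⟨by_contra fun hwΩ => ?_, ?_⟩
  · have h0 : infDist w Ωᶜ = 0 := infDist_zero_of_mem hwΩ
    linarith
  · have htri : ‖w - p‖ ≤ dist z w + ‖z - p‖ := by
      rw [← dist_eq_norm, ← dist_eq_norm, dist_comm z w]
      exact dist_triangle w z p
    nlinarith

/-- Cauchy estimate in a cone: if `f` is within `ε * ‖w - p‖` of the affine map
`w ↦ v + L (w - p)` on the ball around `z` of half the distance to the complement of `Ω`,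
then the derivative of `f` at `z` is within `6 * ε * C` of `L`. -/
theorem norm_fderiv_sub_le_of_affine_approx {E F : Type*}
    [NormedAddCommGroup E] [NormedSpace ℂ E] [NormedAddCommGroup F] [NormedSpace ℂ F]
    {Ω : Set E} (hΩ : IsOpen Ω) {p z : E} (hp : p ∉ Ω) (hz : z ∈ Ω)
    {f : E → F} (hf : DifferentiableOn ℂ f Ω) (v : F) (L : E →L[ℂ] F) {C ε : ℝ}
    (hε : 0 ≤ ε) (hzC : ‖z - p‖ ≤ C * infDist z Ωᶜ)
    (happrox : ∀ w ∈ ball z (infDist z Ωᶜ / 2), ‖f w - v - L (w - p)‖ ≤ ε * ‖w - p‖) :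
    ‖fderiv ℂ f z - L‖ ≤ 6 * ε * C := by
  set d := infDist z Ωᶜ
  have hdpos : 0 < d :=
    (hΩ.isClosed_compl.notMem_iff_infDist_pos ⟨p, hp⟩).1 (not_not.2 hz)
  have hdle : d ≤ ‖z - p‖ := by
    rw [← dist_eq_norm]
    exact infDist_le_dist_of_mem hp
  have hball : ball z (d / 2) ⊆ Ω := fun w hw =>
    by_contra fun hwΩ => by
      have h : d ≤ dist z w := infDist_le_dist_of_mem hwΩ
      rw [mem_ball, dist_comm] at hw
      linarith
  have hbound : ∀ w ∈ ball z (d / 2), ‖f w - v - L (w - p)‖ ≤ 3 / 2 * ε * C * d := by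
    intro w hw
    have htri : ‖w - p‖ ≤ dist w z + ‖z - p‖ := by
      rw [← dist_eq_norm, ← dist_eq_norm]
      exact dist_triangle w z p
    have hwd : dist w z < d / 2 := hw
    have hwp : ‖w - p‖ ≤ 3 / 2 * (C * d) := by linarith
    calc ‖f w - v - L (w - p)‖ ≤ ε * ‖w - p‖ := happrox w hw
      _ ≤ ε * (3 / 2 * (C * d)) := by gcongr
      _ = 3 / 2 * ε * C * d := by ring
  have hfz : HasFDerivAt f (fderiv ℂ f z) z :=
    (hf.differentiableAt (hΩ.mem_nhds hz)).hasFDerivAt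
  have hg : HasFDerivAt (fun w => f w - v - L (w - p)) (fderiv ℂ f z - L) z :=
    (hfz.sub_const v).sub (L.hasFDerivAt.comp z ((hasFDerivAt_id z).sub_const p))
  have hgd : DifferentiableOn ℂ (fun w => f w - v - L (w - p)) (ball z (d / 2)) :=
    ((hf.mono hball).sub_const v).sub
      (L.differentiable.comp (differentiable_id.sub_const p)).differentiableOn
  have hmaps : MapsTo (fun w => f w - v - L (w - p)) (ball z (d / 2))
      (closedBall (f z - v - L (z - p)) (3 * ε * C * d)) := by
    intro w hw
    rw [mem_closedBall, dist_eq_norm]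
    refine (norm_sub_le _ _).trans ?_
    linarith [hbound w hw, hbound z (mem_ball_self (half_pos hdpos))]
  have hcauchy := norm_fderiv_le_div_of_mapsTo_ball hgd hmaps (half_pos hdpos)
  rw [hg.fderiv] at hcauchy
  refine hcauchy.trans_eq ?_
  field_simp
  ring

theorem nontangential_derivative_convergence
    {n m : ℕ} (Ω : Set (En (n + 1)))
    (hΩ : IsDomain' Ω) (p : En (n + 1)) (hp : p ∈ frontier Ω)
    (hsmooth : ∃ W ∈ 𝓝 p, ∃ ρ : En (n + 1) → ℝ, IsOpen W ∧
      ContDiffOn ℝ (⊤ : ℕ∞) ρ W ∧ fderiv ℝ ρ p ≠ 0 ∧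
      Ω ∩ W = {z ∈ W | ρ z < 0})
    (f : En (n + 1) → En m) (hf : DifferentiableOn ℂ f Ω)
    (v : En m) (L : En (n + 1) →L[ℂ] En m)
    (hnt : ∀ C : ℝ, 0 < C →
      Tendsto (fun z => ‖f z - v - L (z - p)‖ / ‖z - p‖)
        (𝓝[{z ∈ Ω | ‖z - p‖ ≤ C * Metric.infDist z Ωᶜ}] p) (𝓝 0)) :
    ∀ C : ℝ, 0 < C → ∀ zk : ℕ → En (n + 1),
      (∀ k, zk k ∈ {z ∈ Ω | ‖z - p‖ ≤ C * Metric.infDist z Ωᶜ}) →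
      Tendsto zk atTop (𝓝 p) →
      Tendsto (fun k => fderiv ℂ f (zk k)) atTop (𝓝 L) := by
  intro C hC zk hzk hlim
  have hpΩ : p ∉ Ω := by
    rw [hΩ.1.frontier_eq] at hp
    exact hp.2
  rw [Metric.tendsto_nhds]
  intro δ hδ
  set ε := δ / (12 * C) with hε
  have hεpos : 0 < ε := by positivity
  have hsmall := (hnt (2 * C + 1) (by positivity)).eventually_lt_const hεpos
  obtain ⟨r, hr, hsub⟩ := Metric.mem_nhdsWithin_iff.1 hsmall
  filter_upwards [hlim (ball_mem_nhds p (half_pos hr))] with k hk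
  obtain ⟨hkΩ, hkC⟩ := hzk k
  have hkr : dist (zk k) p < r / 2 := hk
  have hle : infDist (zk k) Ωᶜ ≤ dist (zk k) p := infDist_le_dist_of_mem hpΩ
  have hmain : ‖fderiv ℂ f (zk k) - L‖ ≤ 6 * ε * C := by
    refine norm_fderiv_sub_le_of_affine_approx hΩ.1 hpΩ hkΩ hf v L hεpos.le hkC fun w hw => ?_
    have hcone := ball_half_infDist_subset_cone hC hkC hw
    have hwr : w ∈ ball p r := by
      have hwz : dist w (zk k) < infDist (zk k) Ωᶜ / 2 := hw
      have htri := dist_triangle w (zk k) p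
      rw [mem_ball]
      linarith
    have hquot : ‖f w - v - L (w - p)‖ / ‖w - p‖ < ε := hsub ⟨hwr, hcone⟩
    have hwp : 0 < ‖w - p‖ := norm_sub_pos_iff.2 fun h => hpΩ (h ▸ hcone.1)
    exact ((div_lt_iff₀ hwp).1 hquot).le
  rw [dist_eq_norm]
  have hεC : 6 * ε * C = δ / 2 := by
    rw [hε]
    field_simp
    norm_num
  linarith
end
end

section
/- Let Ω ⊂ ℂⁿ be a bounded pseudoconvex domain with C^∞ boundary and let F : Ω → Ω be holomorphic. Suppose the sequence of iterates {F^m} is not compactly divergent, i.e., some subsequence F^{m_j} converges uniformly on compact subsets of Ω to a map h₀ with h₀(Ω) ⊆ Ω. Then there exists a holomorphic retraction r : Ω → Ω (r ∘ r = r) which is the limit, uniformly on compact subsets, of some subsequence of {F^m}; moreover, F maps M := r(Ω) bijectively onto M, and every map h which is a limit, uniformly on compact subsets, of a subsequence of {F^m} satisfies h = h ∘ r and restricts to a bijection of M onto M. -/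
open Complex Topology Filter Metric Set Function

noncomputable section

namespace EquicontinuousIterates

/-- The orbits of `x` and `y` under `f` stay within distance `ε` of each other at all times. -/
def OrbitClose {X : Type*} [PseudoMetricSpace X] (f : X → X) (ε : ℝ) (x y : X) : Prop :=
  ∀ k : ℕ, dist (f^[k] x) (f^[k] y) ≤ ε

section Orbits

variable {X : Type*} [MetricSpace X] {f : X → X} {ε δ : ℝ} {x y z : X}

theorem OrbitClose.symm (h : OrbitClose f ε x y) : OrbitClose f ε y x := fun k => by
  rw [dist_comm]
  exact h k

theorem OrbitClose.trans (h₁ : OrbitClose f ε x y) (h₂ : OrbitClose f δ y z) :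
    OrbitClose f (ε + δ) x z := fun k =>
  (dist_triangle _ (f^[k] y) _).trans (add_le_add (h₁ k) (h₂ k))

theorem OrbitClose.iterate (h : OrbitClose f ε x y) (m : ℕ) :
    OrbitClose f ε (f^[m] x) (f^[m] y) := fun k => by
  simpa only [← iterate_add_apply] using h (k + m)

theorem eventually_orbitClose (hf : Equicontinuous fun k => f^[k]) (x : X) (hε : 0 < ε) :
    ∀ᶠ y in 𝓝 x, OrbitClose f ε x y := by
  filter_upwards [Metric.equicontinuousAt_iff_right.1 (hf x) ε hε] with y hy k
  exact (hy k).le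

theorem tendsto_iterate_of_tendsto (hf : Equicontinuous fun k => f^[k]) {ι : Type*} {l : Filter ι}
    {a : ι → ℕ} {u : ι → X} {A : X} (hu : Tendsto u l (𝓝 y))
    (ha : Tendsto (fun i => f^[a i] y) l (𝓝 A)) :
    Tendsto (fun i => f^[a i] (u i)) l (𝓝 A) := by
  rw [Metric.tendsto_nhds] at ha ⊢
  intro ε hε
  filter_upwards [ha (ε / 2) (half_pos hε), hu (eventually_orbitClose hf y (half_pos hε))]
    with i h₁ h₂
  have h₃ := dist_triangle_left (f^[a i] (u i)) A (f^[a i] y)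
  have h₄ : dist (f^[a i] y) (f^[a i] (u i)) ≤ ε / 2 := h₂ (a i)
  linarith

/-- On the orbit of a recurrent point, orbit closeness can be pulled back along the map. -/
theorem orbitClose_of_iterate_of_recurrent {w : X}
    (hw : ∀ ε > 0, ∀ N, ∃ p ≥ N, OrbitClose f ε w (f^[p] w)) {a b m : ℕ}
    (h : OrbitClose f ε (f^[m + a] w) (f^[m + b] w)) : OrbitClose f ε (f^[a] w) (f^[b] w) := by
  intro k
  refine le_of_forall_pos_le_add fun η hη => ?_
  obtain ⟨p, hp, hpw⟩ := hw (η / 2) (half_pos hη) m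
  obtain ⟨q, rfl⟩ := Nat.exists_eq_add_of_le hp
  have h₁ := hpw (k + a)
  have h₂ := hpw (k + b)
  have h₃ := h (q + k)
  simp only [← iterate_add_apply] at h₁ h₂ h₃ ⊢
  rw [show k + a + (m + q) = q + k + (m + a) by ring] at h₁
  rw [show k + b + (m + q) = q + k + (m + b) by ring, dist_comm] at h₂
  have := dist_triangle4 (f^[k + a] w) (f^[q + k + (m + a)] w) (f^[q + k + (m + b)] w)
    (f^[k + b] w)
  linarith

/-- In a compact set, finitely many elements of a family of points of an orbit suffice to
approximate all the others. -/
theorem exists_bounded_net (hf : Equicontinuous fun k => f^[k]) {K : Set X} (hK : IsCompact K)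
    (hε : 0 < ε) {w : X} {S : Set ℕ} (hS : ∀ k ∈ S, f^[k] w ∈ K) :
    ∃ N, ∀ k ∈ S, ∃ i ∈ S, i ≤ N ∧ OrbitClose f ε (f^[k] w) (f^[i] w) := by
  classical
  obtain ⟨t, -, ht⟩ := hK.elim_nhds_subcover (fun y => {x | OrbitClose f (ε / 2) y x})
    fun y _ => eventually_orbitClose hf y (half_pos hε)
  have hrep : ∀ y : X, ∃ i, (∃ k ∈ S, OrbitClose f (ε / 2) y (f^[k] w)) →
      i ∈ S ∧ OrbitClose f (ε / 2) y (f^[i] w) := fun y => by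
    by_cases h : ∃ k ∈ S, OrbitClose f (ε / 2) y (f^[k] w)
    · obtain ⟨i, hi⟩ := h
      exact ⟨i, fun _ => hi⟩
    · exact ⟨0, fun h' => absurd h' h⟩
  choose c hc using hrep
  refine ⟨t.sup c, fun k hk => ?_⟩
  obtain ⟨y, hy, hyk⟩ := mem_iUnion₂.1 (ht (hS k hk))
  obtain ⟨h₁, h₂⟩ := hc y ⟨k, hk, hyk⟩
  refine ⟨c y, h₁, Finset.le_sup hy, ?_⟩
  simpa using OrbitClose.trans (OrbitClose.symm hyk) h₂

/-- The orbit of a recurrent point is relatively compact. -/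
theorem exists_isCompact_orbit_of_recurrent [LocallyCompactSpace X]
    (hf : Equicontinuous fun k => f^[k]) {w : X}
    (hw : ∀ ε > 0, ∀ N, ∃ p ≥ N, OrbitClose f ε w (f^[p] w)) :
    ∃ K, IsCompact K ∧ ∀ k, f^[k] w ∈ K := by
  obtain ⟨ε, hε, hK⟩ := (isCompact_singleton (x := w)).exists_isCompact_cthickening
  rw [cthickening_singleton _ hε.le] at hK
  set S : Set ℕ := {k | OrbitClose f ε w (f^[k] w)}
  have hSK : ∀ k ∈ S, f^[k] w ∈ closedBall w ε := fun k hk => by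
    simpa [dist_comm] using hk 0
  obtain ⟨N, hN⟩ := exists_bounded_net hf hK (half_pos hε) hSK
  obtain ⟨p, hp, hpw⟩ := hw (ε / 2) (half_pos hε) (N + 1)
  have hnext : ∀ k ∈ S, ∃ k' ∈ S, k < k' ∧ k' ≤ k + p := fun k hk => by
    obtain ⟨i, -, hi, hki⟩ := hN k hk
    refine ⟨k + (p - i), ?_, by omega, by omega⟩
    refine orbitClose_of_iterate_of_recurrent (a := 0) (m := i) hw ?_
    have h₁ := hpw.iterate i
    have h₂ := hki.symm.iterate p
    simp only [← iterate_add_apply] at h₁ h₂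
    rw [add_comm i p] at h₁
    rw [show i + (k + (p - i)) = p + k by omega, add_zero]
    simpa using h₁.trans h₂
  have hcover : ∀ n, ∃ k ∈ S, k ≤ n ∧ n < k + p := fun n => by
    induction n with
    | zero => exact ⟨0, fun k => by simpa using hε.le, le_rfl, by omega⟩
    | succ n ih =>
      obtain ⟨k, hk, hkn, hnk⟩ := ih
      rcases Nat.lt_or_ge (n + 1) (k + p) with h | h
      · exact ⟨k, hk, by omega, h⟩
      · obtain ⟨k', hk', h₁, h₂⟩ := hnext k hk
        exact ⟨k', hk', by omega, by omega⟩
  refine ⟨⋃ l ∈ Finset.range p, f^[l] '' closedBall w ε,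
    (Finset.range p).isCompact_biUnion fun l _ => hK.image (hf.continuous l), fun n => ?_⟩
  obtain ⟨k, hk, hkn, hnk⟩ := hcover n
  refine mem_iUnion₂.2 ⟨n - k, Finset.mem_range.2 (by omega), f^[k] w, hSK k hk, ?_⟩
  rw [← iterate_add_apply, Nat.sub_add_cancel hkn]

/-- An orbit with an accumulation point is relatively compact. -/
theorem exists_isCompact_orbit_of_tendsto [LocallyCompactSpace X]
    (hf : Equicontinuous fun k => f^[k]) {m : ℕ → ℕ} (hm : Tendsto m atTop atTop) {z w : X}
    (h : Tendsto (fun j => f^[m j] z) atTop (𝓝 w)) :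
    ∃ K, IsCompact K ∧ ∀ k, f^[k] z ∈ K := by
  have hclose : ∀ ε > 0, ∀ᶠ j in atTop, OrbitClose f ε w (f^[m j] z) := fun ε hε =>
    h (eventually_orbitClose hf w hε)
  have hrec : ∀ ε > 0, ∀ N, ∃ p ≥ N, OrbitClose f ε w (f^[p] w) := fun ε hε N => by
    obtain ⟨j, hj⟩ := (hclose (ε / 2) (half_pos hε)).exists
    obtain ⟨i, hi, him⟩ := ((hclose (ε / 2) (half_pos hε)).and
      (hm.eventually_ge_atTop (N + m j))).exists
    refine ⟨m i - m j, by omega, ?_⟩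
    have h₁ := hj.symm.iterate (m i - m j)
    rw [← iterate_add_apply, Nat.sub_add_cancel (by omega)] at h₁
    simpa using hi.trans h₁
  obtain ⟨K, hK, hwK⟩ := exists_isCompact_orbit_of_recurrent hf hrec
  obtain ⟨δ, hδ, hKδ⟩ := hK.exists_isCompact_cthickening
  obtain ⟨j, hj⟩ := (hclose δ hδ).exists
  refine ⟨cthickening δ K ∪ (fun k => f^[k] z) '' Iio (m j),
    hKδ.union ((finite_Iio _).image _).isCompact, fun k => ?_⟩
  rcases Nat.lt_or_ge k (m j) with hk | hk
  · exact Or.inr ⟨k, hk, rfl⟩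
  · refine Or.inl (mem_cthickening_of_dist_le _ (f^[k - m j] w) _ _ (hwK _) ?_)
    have h₁ := hj.symm (k - m j)
    rwa [← iterate_add_apply, Nat.sub_add_cancel hk] at h₁

/-- Ascoli's theorem for iterates with relatively compact orbits, in sequential form. -/
theorem exists_subseq_tendsto [TopologicalSpace.SeparableSpace X] (hf : Equicontinuous fun k => f^[k])
    (horb : ∀ z, ∃ K, IsCompact K ∧ ∀ k, f^[k] z ∈ K) (a : ℕ → ℕ) :
    ∃ (φ : ℕ → ℕ) (g : X → X), StrictMono φ ∧
      ∀ z, Tendsto (fun i => f^[a (φ i)] z) atTop (𝓝 (g z)) := by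
  rcases isEmpty_or_nonempty X with hX | hX
  · exact ⟨id, id, strictMono_id, fun z => hX.elim z⟩
  choose K hK hKmem using horb
  let u := TopologicalSpace.denseSeq X
  obtain ⟨v, -, φ, hφ, hv⟩ := (isCompact_univ_pi fun n => hK (u n)).tendsto_subseq
    (x := fun i n => f^[a i] (u n)) fun i n _ => hKmem (u n) (a i)
  have hcauchy : ∀ z, CauchySeq fun i => f^[a (φ i)] z := fun z => by
    rw [Metric.cauchySeq_iff]
    intro ε hε
    obtain ⟨_, hn, n, rfl⟩ := mem_closure_iff_nhds.1 (TopologicalSpace.denseRange_denseSeq X z) _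
      (eventually_orbitClose hf z (ε := ε / 4) (by positivity))
    obtain ⟨N, hN⟩ := Metric.cauchySeq_iff.1 (tendsto_pi_nhds.1 hv n).cauchySeq (ε / 2)
      (half_pos hε)
    refine ⟨N, fun i hi j hj => ?_⟩
    have h₁ : dist (f^[a (φ i)] (u n)) (f^[a (φ j)] (u n)) < ε / 2 := hN i hi j hj
    have h₂ := hn (a (φ i))
    have h₃ := hn (a (φ j))
    rw [dist_comm] at h₃
    have h₄ := dist_triangle4 (f^[a (φ i)] z) (f^[a (φ i)] (u n)) (f^[a (φ j)] (u n))
      (f^[a (φ j)] z)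
    change dist _ (f^[a (φ i)] (u n)) ≤ _ at h₂
    change dist (f^[a (φ j)] (u n)) _ ≤ _ at h₃
    linarith
  choose g _ hg using fun z => cauchySeq_tendsto_of_isComplete (hK z).isComplete
    (fun i => hKmem z (a (φ i))) (hcauchy z)
  exact ⟨φ, g, hφ, hg⟩

/-- Limits of iterates along two sequences compose to the limit along the sum. -/
theorem tendsto_iterate_comp (hf : Equicontinuous fun k => f^[k]) {a b c : ℕ → ℕ} {A B : X → X}
    (hA : ∀ z, Tendsto (fun i => f^[a i] z) atTop (𝓝 (A z)))
    (hB : ∀ z, Tendsto (fun i => f^[b i] z) atTop (𝓝 (B z))) (hc : ∀ i, a i + b i = c i) (z : X) :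
    Tendsto (fun i => f^[c i] z) atTop (𝓝 (A (B z))) := by
  simpa only [← hc, iterate_add_apply] using tendsto_iterate_of_tendsto hf (hB z) (hA (B z))

theorem comp_eq_of_tendsto (hf : Equicontinuous fun k => f^[k]) {a b c : ℕ → ℕ} {A B C : X → X}
    (hA : ∀ z, Tendsto (fun i => f^[a i] z) atTop (𝓝 (A z)))
    (hB : ∀ z, Tendsto (fun i => f^[b i] z) atTop (𝓝 (B z)))
    (hC : ∀ z, Tendsto (fun i => f^[c i] z) atTop (𝓝 (C z))) (hc : ∀ i, a i + b i = c i) (z : X) :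
    A (B z) = C z :=
  tendsto_nhds_unique (tendsto_iterate_comp hf hA hB hc z) (hC z)

theorem comp_comm_of_tendsto (hf : Equicontinuous fun k => f^[k]) {a b : ℕ → ℕ} {A B : X → X}
    (hA : ∀ z, Tendsto (fun i => f^[a i] z) atTop (𝓝 (A z)))
    (hB : ∀ z, Tendsto (fun i => f^[b i] z) atTop (𝓝 (B z))) (z : X) :
    A (B z) = B (A z) :=
  comp_eq_of_tendsto hf hA hB (tendsto_iterate_comp hf hB hA fun i => add_comm (b i) (a i))
    (fun _ => rfl) z

variable [TopologicalSpace.SeparableSpace X]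

/-- If the iterates converge along some sequence, then they converge to an idempotent map along
another sequence. -/
theorem exists_idempotent_limit (hf : Equicontinuous fun k => f^[k])
    (horb : ∀ z, ∃ K, IsCompact K ∧ ∀ k, f^[k] z ∈ K) {m : ℕ → ℕ} (hm : StrictMono m) {h : X → X}
    (hh : ∀ z, Tendsto (fun i => f^[m i] z) atTop (𝓝 (h z))) :
    ∃ (p : ℕ → ℕ) (r : X → X), StrictMono p ∧
      (∀ z, Tendsto (fun i => f^[p i] z) atTop (𝓝 (r z))) ∧ ∀ z, r (r z) = r z := by
  let b : ℕ → ℕ := fun i => m (2 * m i + i)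
  have hb : ∀ i, 2 * m i + i ≤ b i := fun i => hm.le_apply
  obtain ⟨φ, r, hφ, hr⟩ := exists_subseq_tendsto hf horb fun i => b i - m i
  obtain ⟨ψ, g, hψ, hg⟩ := exists_subseq_tendsto hf horb fun i => b (φ i) - 2 * m (φ i)
  have hχ : Tendsto (φ ∘ ψ) atTop atTop := (hφ.comp hψ).tendsto_atTop
  have hmψ : ∀ z, Tendsto (fun i => f^[m (φ (ψ i))] z) atTop (𝓝 (h z)) := fun z =>
    (hh z).comp hχ
  have hbψ : ∀ z, Tendsto (fun i => f^[b (φ (ψ i))] z) atTop (𝓝 (h z)) := fun z =>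
    (hh z).comp ((tendsto_atTop_mono (fun i => Nat.le_add_left i (2 * m i)) tendsto_id).comp hχ)
  have hrψ : ∀ z, Tendsto (fun i => f^[b (φ (ψ i)) - m (φ (ψ i))] z) atTop (𝓝 (r z)) := fun z =>
    (hr z).comp hψ.tendsto_atTop
  have hhr : ∀ z, h (r z) = h z := comp_eq_of_tendsto hf hmψ hrψ hbψ fun i => by
    have := hb (φ (ψ i))
    omega
  have hgh : ∀ z, g (h z) = r z := comp_eq_of_tendsto hf hg hmψ hrψ fun i => by
    have := hb (φ (ψ i))
    omega
  have hp : Tendsto (fun i => b (φ i) - m (φ i)) atTop atTop :=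
    tendsto_atTop_mono (fun i => by
      have h₁ := hb (φ i)
      omega) hφ.tendsto_atTop
  obtain ⟨θ, hθ, hpθ⟩ := strictMono_subseq_of_tendsto_atTop hp
  exact ⟨_, r, hpθ, fun z => (hr z).comp hθ.tendsto_atTop, fun z => by
    rw [← hgh (r z), hhr, hgh]⟩

/-- A limit of iterates permutes the image of an idempotent limit of iterates. -/
theorem bijOn_range_of_tendsto (hf : Equicontinuous fun k => f^[k])
    (horb : ∀ z, ∃ K, IsCompact K ∧ ∀ k, f^[k] z ∈ K) {p : ℕ → ℕ} {r : X → X} (hp : StrictMono p)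
    (hr : ∀ z, Tendsto (fun i => f^[p i] z) atTop (𝓝 (r z))) (hrr : ∀ z, r (r z) = r z)
    {k : ℕ → ℕ} {h : X → X} (hh : ∀ z, Tendsto (fun i => f^[k i] z) atTop (𝓝 (h z))) :
    BijOn h (range r) (range r) := by
  let b : ℕ → ℕ := fun i => p (k i + i)
  have hb : ∀ i, k i + i ≤ b i := fun i => hp.le_apply
  obtain ⟨φ, g, hφ, hg⟩ := exists_subseq_tendsto hf horb fun i => b i - k i
  have hhφ : ∀ z, Tendsto (fun i => f^[k (φ i)] z) atTop (𝓝 (h z)) := fun z =>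
    (hh z).comp hφ.tendsto_atTop
  have hrφ : ∀ z, Tendsto (fun i => f^[b (φ i)] z) atTop (𝓝 (r z)) := fun z =>
    (hr z).comp ((tendsto_atTop_mono (fun i => Nat.le_add_left i (k i)) tendsto_id).comp
      hφ.tendsto_atTop)
  have hgh : ∀ z, g (h z) = r z := comp_eq_of_tendsto hf hg hhφ hrφ fun i => by
    have := hb (φ i)
    omega
  have hhg : ∀ z, h (g z) = r z := fun z => by
    rw [comp_comm_of_tendsto hf hhφ hg, hgh]
  have hhr : ∀ z, h (r z) = r (h z) := comp_comm_of_tendsto hf hh hr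
  have hgr : ∀ z, g (r z) = r (g z) := comp_comm_of_tendsto hf hg hrφ
  refine ⟨?_, ?_, ?_⟩
  · rintro _ ⟨z, rfl⟩
    exact ⟨h z, (hhr z).symm⟩
  · rintro _ ⟨x, rfl⟩ _ ⟨y, rfl⟩ hxy
    rw [← hrr x, ← hgh, hxy, hgh, hrr]
  · rintro _ ⟨z, rfl⟩
    exact ⟨g (r z), ⟨g z, (hgr z).symm⟩, by rw [hhg, hrr]⟩

/-- A limit of iterates factors through every idempotent limit of iterates. -/
theorem comp_idempotent_eq_of_tendsto (hf : Equicontinuous fun k => f^[k])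
    (horb : ∀ z, ∃ K, IsCompact K ∧ ∀ k, f^[k] z ∈ K) {p : ℕ → ℕ} {r : X → X}
    (hr : ∀ z, Tendsto (fun i => f^[p i] z) atTop (𝓝 (r z))) (hrr : ∀ z, r (r z) = r z)
    {k : ℕ → ℕ} {h : X → X} (hk : StrictMono k)
    (hh : ∀ z, Tendsto (fun i => f^[k i] z) atTop (𝓝 (h z))) (z : X) : h (r z) = h z := by
  let b : ℕ → ℕ := fun i => k (p i + i)
  have hb : ∀ i, p i + i ≤ b i := fun i => hk.le_apply
  obtain ⟨φ, g, hφ, hg⟩ := exists_subseq_tendsto hf horb fun i => b i - p i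
  have hrφ : ∀ z, Tendsto (fun i => f^[p (φ i)] z) atTop (𝓝 (r z)) := fun z =>
    (hr z).comp hφ.tendsto_atTop
  have hhφ : ∀ z, Tendsto (fun i => f^[b (φ i)] z) atTop (𝓝 (h z)) := fun z =>
    (hh z).comp ((tendsto_atTop_mono (fun i => Nat.le_add_left i (p i)) tendsto_id).comp
      hφ.tendsto_atTop)
  have hgr : ∀ z, g (r z) = h z := comp_eq_of_tendsto hf hg hrφ hhφ fun i => by
    have := hb (φ i)
    omega
  rw [← hgr (r z), hrr, hgr]

end Orbits

end EquicontinuousIterates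

section HolomorphicLimits

variable {E G : Type*} [NormedAddCommGroup E] [NormedSpace ℂ E] [NormedAddCommGroup G]
  [NormedSpace ℂ G]

/-- A uniformly bounded family of holomorphic maps on an open set is equicontinuous there. -/
theorem equicontinuousOn_of_differentiableOn_of_isBounded {ι : Type*} {U : Set E} (hU : IsOpen U)
    {B : Set G} (hB : Bornology.IsBounded B) {f : ι → E → G}
    (hf : ∀ i, DifferentiableOn ℂ (f i) U) (hfB : ∀ i, MapsTo (f i) U B) :
    EquicontinuousOn f U := by
  intro x hx
  refine EquicontinuousAt.equicontinuousWithinAt ?_ U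
  obtain ⟨δ, hδ, hball⟩ := Metric.isOpen_iff.1 hU x hx
  refine Metric.equicontinuousAt_of_continuity_modulus
    (fun y => Metric.diam B / δ * dist y x) ?_ f ?_
  · have : Tendsto (fun y => Metric.diam B / δ * dist y x) (𝓝 x)
        (𝓝 (Metric.diam B / δ * dist x x)) := Continuous.tendsto (by fun_prop) x
    simpa using this
  · filter_upwards [ball_mem_nhds x hδ] with y hy i
    rw [dist_comm]
    refine Complex.dist_le_div_mul_dist_of_mapsTo_ball ((hf i).mono hball) (fun z hz => ?_) hy
    exact Metric.dist_le_diam_of_mem hB (hfB i (hball hz)) (hfB i hx)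

/-- The derivatives of a uniformly convergent family of holomorphic maps are uniformly Cauchy on
smaller balls. -/
theorem uniformCauchySeqOn_fderiv_of_tendstoUniformlyOn {ι : Type*} {l : Filter ι} {x : E} {δ : ℝ}
    (hδ : 0 < δ) {f : ι → E → G} {g : E → G} (hf : ∀ i, DifferentiableOn ℂ (f i) (ball x (2 * δ)))
    (hfg : TendstoUniformlyOn f g l (ball x (2 * δ))) :
    UniformCauchySeqOn (fun i => fderiv ℂ (f i)) l (ball x δ) := by
  intro u hu
  obtain ⟨ε, hε, hεu⟩ := Metric.mem_uniformity_dist.1 hu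
  filter_upwards [hfg.uniformCauchySeqOn _ (Metric.dist_mem_uniformity
    (show 0 < ε * δ / 3 by positivity))] with ij hij y hy
  have hsub : ball y δ ⊆ ball x (2 * δ) := ball_subset_ball' (by
    rw [mem_ball] at hy
    linarith)
  have hd : ∀ i, DifferentiableOn ℂ (f i) (ball y δ) := fun i => (hf i).mono hsub
  have hdy : ∀ i, DifferentiableAt ℂ (f i) y := fun i =>
    (hd i).differentiableAt (ball_mem_nhds y hδ)
  have hmaps : MapsTo (f ij.1 - f ij.2) (ball y δ)
      (closedBall ((f ij.1 - f ij.2) y) (2 * (ε * δ / 3))) := fun z hz => by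
    have h₁ := hij z (hsub hz)
    have h₂ := hij y (hsub (mem_ball_self hδ))
    simp only [dist_eq_norm] at h₁ h₂
    rw [mem_closedBall, dist_eq_norm, Pi.sub_apply, Pi.sub_apply]
    linarith [norm_sub_le (f ij.1 z - f ij.2 z) (f ij.1 y - f ij.2 y)]
  have hle := Complex.norm_fderiv_le_div_of_mapsTo_ball ((hd ij.1).sub (hd ij.2)) hmaps hδ
  rw [fderiv_sub (hdy _) (hdy _)] at hle
  refine hεu ?_
  rw [dist_eq_norm]
  refine hle.trans_lt ?_
  rw [div_lt_iff₀ hδ]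
  nlinarith [mul_pos hε hδ]

/-- A uniform limit of holomorphic maps on a ball is complex differentiable at the center. -/
theorem differentiableAt_of_tendstoUniformlyOn_ball [CompleteSpace G] {ι : Type*} {l : Filter ι}
    [l.NeBot] {x : E} {δ : ℝ} (hδ : 0 < δ) {f : ι → E → G} {g : E → G}
    (hf : ∀ i, DifferentiableOn ℂ (f i) (ball x (2 * δ)))
    (hfg : TendstoUniformlyOn f g l (ball x (2 * δ))) : DifferentiableAt ℂ g x := by
  have hsub : ball x δ ⊆ ball x (2 * δ) := ball_subset_ball (by linarith)
  have hcauchy := uniformCauchySeqOn_fderiv_of_tendstoUniformlyOn hδ hf hfg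
  have hlim : ∀ y, ∃ D, y ∈ ball x δ → Tendsto (fun i => fderiv ℂ (f i) y) l (𝓝 D) := fun y => by
    by_cases hy : y ∈ ball x δ
    · obtain ⟨D, hD⟩ := cauchy_map_iff_exists_tendsto.1 (hcauchy.cauchy_map hy)
      exact ⟨D, fun _ => hD⟩
    · exact ⟨0, fun h => absurd h hy⟩
  choose D hD using hlim
  refine (hasFDerivAt_of_tendstoUniformlyOn isOpen_ball
    (hcauchy.tendstoUniformlyOn_of_tendsto hD) (fun i y hy => ?_)
    (fun y hy => hfg.tendsto_at (hsub hy)) (mem_ball_self hδ)).differentiableAt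
  exact ((hf i).differentiableAt (isOpen_ball.mem_nhds (hsub hy))).hasFDerivAt

end HolomorphicLimits

theorem taut_iteration_theory
    {n : ℕ} (Ω : Set (En n)) (ρ : En n → ℝ)
    (hΩ : IsDomain' Ω) (hbd : Bornology.IsBounded Ω)
    (hρ : IsPcxCinfBoundary Ω ρ)
    (F : En n → En n) (hF : DifferentiableOn ℂ F Ω) (hFself : MapsTo F Ω Ω)
    (hncd : ∃ (ms : ℕ → ℕ) (h₀ : En n → En n), StrictMono ms ∧
      (∀ K ⊆ Ω, IsCompact K → TendstoUniformlyOn (fun j => F^[ms j]) h₀ atTop K) ∧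
      h₀ '' Ω ⊆ Ω) :
    ∃ r : En n → En n, DifferentiableOn ℂ r Ω ∧ MapsTo r Ω Ω ∧
      (∀ z ∈ Ω, r (r z) = r z) ∧
      (∃ ms : ℕ → ℕ, StrictMono ms ∧ ∀ K ⊆ Ω, IsCompact K →
        TendstoUniformlyOn (fun j => F^[ms j]) r atTop K) ∧
      BijOn F (r '' Ω) (r '' Ω) ∧
      ∀ h : En n → En n,
        (∃ ms : ℕ → ℕ, StrictMono ms ∧ ∀ K ⊆ Ω, IsCompact K →
          TendstoUniformlyOn (fun j => F^[ms j]) h atTop K) →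
        (∀ z ∈ Ω, h z = h (r z)) ∧ BijOn h (r '' Ω) (r '' Ω) := by
  obtain ⟨hΩo, -⟩ := hΩ
  obtain ⟨m, h₀, hm, hmh₀, hh₀Ω⟩ := hncd
  have : LocallyCompactSpace Ω := hΩo.locallyCompactSpace
  let f : Ω → Ω := hFself.restrict F Ω Ω
  have hFm : ∀ k, MapsTo F^[k] Ω Ω := fun k => hFself.iterate k
  have hfF : ∀ (k : ℕ) (z : Ω), (f^[k] z : En n) = F^[k] z := fun k z => by
    simp only [f, hFself.iterate_restrict k, MapsTo.val_restrict_apply]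
  have hFd : ∀ k, DifferentiableOn ℂ F^[k] Ω := fun k => hF.iterate hFself k
  have hFeq : EquicontinuousOn (fun k => F^[k]) Ω :=
    equicontinuousOn_of_differentiableOn_of_isBounded hΩo hbd hFd hFm
  have hf : Equicontinuous fun k => f^[k] := by
    intro z
    rw [Metric.equicontinuousAt_iff_right]
    intro ε hε
    have h₁ := (equicontinuous_restrict_iff _).2 hFeq z
    filter_upwards [Metric.equicontinuousAt_iff_right.1 h₁ ε hε] with y hy k
    rw [Subtype.dist_eq, hfF, hfF]
    exact hy k
  -- a uniform limit on compact sets is a pointwise limit in `Ω`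
  have hpt : ∀ {k : ℕ → ℕ} {h : En n → En n}, (∀ K ⊆ Ω, IsCompact K →
      TendstoUniformlyOn (fun j => F^[k j]) h atTop K) → ∀ z ∈ Ω,
      Tendsto (fun j => F^[k j] z) atTop (𝓝 (h z)) := fun hk z hz =>
    (hk {z} (singleton_subset_iff.2 hz) isCompact_singleton).tendsto_at rfl
  have horb : ∀ z : Ω, ∃ K, IsCompact K ∧ ∀ k, f^[k] z ∈ K := fun z => by
    refine EquicontinuousIterates.exists_isCompact_orbit_of_tendsto hf hm.tendsto_atTop
      (w := ⟨h₀ z, hh₀Ω ⟨z, z.2, rfl⟩⟩) (tendsto_subtype_rng.2 ?_)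
    simpa only [hfF] using hpt hmh₀ z z.2
  -- every limit of iterates restricts to a self-map of `Ω`
  have hlift : ∀ {k : ℕ → ℕ} {h : En n → En n}, (∀ K ⊆ Ω, IsCompact K →
      TendstoUniformlyOn (fun j => F^[k j]) h atTop K) → ∃ g : Ω → Ω,
      (∀ z, (g z : En n) = h z) ∧ ∀ z, Tendsto (fun j => f^[k j] z) atTop (𝓝 (g z)) := by
    intro k h hk
    have hmem : ∀ z : Ω, h z ∈ Ω := fun z => by
      obtain ⟨K, hK, hKz⟩ := horb z
      obtain ⟨w, -, hw⟩ := (hK.image continuous_subtype_val).isClosed.mem_of_tendsto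
        (hpt hk z z.2) (Eventually.of_forall fun j => ⟨_, hKz (k j), hfF _ _⟩)
      exact hw ▸ w.2
    refine ⟨fun z => ⟨h z, hmem z⟩, fun _ => rfl, fun z => tendsto_subtype_rng.2 ?_⟩
    simpa only [hfF] using hpt hk z z.2
  obtain ⟨g₀, -, hg₀⟩ := hlift hmh₀
  obtain ⟨p, s, hp, hs, hss⟩ := EquicontinuousIterates.exists_idempotent_limit hf horb hm hg₀
  classical
  let r : En n → En n := fun z => if hz : z ∈ Ω then s ⟨z, hz⟩ else z
  have hrs : ∀ z : Ω, r z = s z := fun z => dif_pos z.2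
  have hrange : r '' Ω = Subtype.val '' range s := by
    ext y
    constructor
    · rintro ⟨z, hz, rfl⟩
      exact ⟨_, ⟨⟨z, hz⟩, rfl⟩, (hrs ⟨z, hz⟩).symm⟩
    · rintro ⟨_, ⟨z, rfl⟩, rfl⟩
      exact ⟨z, z.2, hrs z⟩
  have hbij : ∀ {h : En n → En n} {g : Ω → Ω}, (∀ z, (g z : En n) = h z) →
      BijOn g (range s) (range s) → BijOn h (r '' Ω) (r '' Ω) := by
    intro h g hgh hg
    rw [hrange]
    refine ⟨?_, ?_, ?_⟩
    · rintro _ ⟨z, hz, rfl⟩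
      exact ⟨g z, hg.mapsTo hz, hgh z⟩
    · rintro _ ⟨x, hx, rfl⟩ _ ⟨y, hy, rfl⟩ hxy
      rw [← hgh, ← hgh] at hxy
      rw [hg.injOn hx hy (Subtype.ext hxy)]
    · rintro _ ⟨y, hy, rfl⟩
      obtain ⟨x, hx, rfl⟩ := hg.surjOn hy
      exact ⟨x, ⟨x, hx, rfl⟩, (hgh x).symm⟩
  have hrlim : ∀ K ⊆ Ω, IsCompact K → TendstoUniformlyOn (fun j => F^[p j]) r atTop K := by
    intro K hKΩ hK
    refine UniformOnFun.tendsto_iff_tendstoUniformlyOn.1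
      ((EquicontinuousOn.tendsto_uniformOnFun_iff_pi' (𝔖 := {K}) (F := fun j => F^[p j])
        (by simpa using hK) (fun _ hL => hL ▸ (hFeq.mono hKΩ).comp p) atTop r).2 ?_) K rfl
    rw [tendsto_pi_nhds]
    rintro ⟨z, hz⟩
    rw [sUnion_singleton] at hz
    have := (continuous_subtype_val.tendsto _).comp (hs ⟨z, hKΩ hz⟩)
    rw [← hrs] at this
    refine this.congr fun j => hfF _ _
  have hrd : DifferentiableOn ℂ r Ω := fun x hx => by
    obtain ⟨δ, hδ, hball⟩ := Metric.nhds_basis_closedBall.mem_iff.1 (hΩo.mem_nhds hx)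
    have hb : ball x (2 * (δ / 2)) ⊆ closedBall x δ := by
      rw [mul_div_cancel₀ δ two_ne_zero]
      exact ball_subset_closedBall
    exact (differentiableAt_of_tendstoUniformlyOn_ball (half_pos hδ)
      (fun i => (hFd (p i)).mono (hb.trans hball))
      ((hrlim _ hball (isCompact_closedBall x δ)).mono hb)).differentiableWithinAt
  refine ⟨r, hrd, fun z hz => ?_, fun z hz => ?_, ⟨p, hp, hrlim⟩, ?_, ?_⟩
  · exact hrs ⟨z, hz⟩ ▸ (s ⟨z, hz⟩).2
  · rw [hrs ⟨z, hz⟩, hrs, hss]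
  · exact hbij (g := f) (fun _ => rfl)
      (EquicontinuousIterates.bijOn_range_of_tendsto hf horb hp hs hss (k := fun _ => 1)
        fun z => tendsto_const_nhds)
  · rintro h ⟨k, hk, hkh⟩
    obtain ⟨g, hgh, hg⟩ := hlift hkh
    refine ⟨fun z hz => ?_, hbij hgh
      (EquicontinuousIterates.bijOn_range_of_tendsto hf horb hp hs hss hg)⟩
    rw [hrs ⟨z, hz⟩, ← hgh, EquicontinuousIterates.comp_idempotent_eq_of_tendsto hf horb hs hss
      hk hg, hgh]
end
end
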